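/- arXiv:1902.10000 — 2 statements merged into one kernel-verified Lean document; each statement's English description precedes it below -/
import Mathlib

section
/- Fix x > 0. For a self-similar profile φ_ε define F_ε : [0,∞) → [0,∞) by F_ε(y) := ∫₀^{x−y} φ_ε(z) dz for 0 ≤ y ≤ x and F_ε(y) := 0 for y > x, and let F₀(y) := 1 − e^{−(x−y)} for 0 ≤ y ≤ x and F₀(y) := 0 for y > x. Then for every sequence ε_k → 0 and every sequence of normalised self-similar profiles φ_{ε_k} for K_{ε_k}, F_{ε_k} converges to F₀ uniformly on [0,∞), i.e. sup_{y ∈ [0,∞)} |F_{ε_k}(y) − F₀(y)| → 0 as k → ∞. Moreover the functions y ↦ ∫_{x−y}^∞ φ_{ε_k}(z) dz converge uniformly on [0,x] to y ↦ e^{−(x−y)}. -/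
open MeasureTheory Real Set Filter

noncomputable def weight (a b x : ℝ) : ℝ := if x ≤ 1 then x ^ a else x ^ b

noncomputable def Xnorm (a b : ℝ) (g : ℝ → ℝ) : ℝ :=
  ∫ x in Ioi (0:ℝ), |g x| * weight a b x

def MemX (a b : ℝ) (g : ℝ → ℝ) : Prop :=
  IntegrableOn (fun x => g x * weight a b x) (Ioi 0)

noncomputable def Kern (ε : ℝ) (W : ℝ → ℝ → ℝ) (x y : ℝ) : ℝ := 2 + ε * W x y

def GoodW (α : ℝ) (W : ℝ → ℝ → ℝ) : Prop :=
  ContinuousOn (fun p : ℝ × ℝ => W p.1 p.2) (Ioi 0 ×ˢ Ioi 0) ∧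
  (∀ x y : ℝ, 0 < x → 0 < y → W x y = W y x) ∧
  (∀ l x y : ℝ, 0 < l → 0 < x → 0 < y → W (l * x) (l * y) = W x y) ∧
  (∀ x y : ℝ, 0 < x → 0 < y → 0 ≤ W x y ∧ W x y ≤ (x / y) ^ α + (y / x) ^ α)

def IsProfile (K : ℝ → ℝ → ℝ) (φ : ℝ → ℝ) : Prop :=
  LocallyIntegrableOn φ (Ioi 0) ∧
  (∀ᵐ x ∂(volume.restrict (Ioi (0:ℝ))), 0 ≤ φ x) ∧
  IntegrableOn (fun x => x * φ x) (Ioi 0) ∧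
  (∀ᵐ x ∂(volume.restrict (Ioi (0:ℝ))),
    x ^ 2 * φ x = ∫ y in Ioo 0 x, ∫ z in Ioi (x - y), y * K y z * φ y * φ z)

def IsNormalised (φ : ℝ → ℝ) : Prop := ∫ x in Ioi (0:ℝ), x * φ x = 1

/-!
Let `ψ(y) = 1 - exp (-q y)` and let `B(q)` be the integral of `ψ` against a profile. Integrating
the profile equation against the derivative of `-ψ(x) / x` and symmetrising turns it into
`2 (B - q B') = ∬ K(y, z) ψ(y) ψ(z) φ(y) φ(z) dy dz`.

Since `K ≥ 2`, this gives `B² ≤ B - q B' ≤ B`, so `B ≤ 1`: a profile has at most unit mass. With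
the mass and the first moment under control, the contribution of `K - 2` to the double integral is
at most `2 ε q ^ (2 - α)`. Hence `u = B / q` satisfies `u' = -u² - ρ` with `0 ≤ ρ ≤ ε q ^ (-α)` and
`u(0+) = 1`. As `α < 1`, this perturbation is integrable at `0`, and comparison with the solution
`1 / (1 + q)` for `ε = 0` gives `B(q) → q / (1 + q)`.

At the integers `q` this says that the moments of the image of `φ(x) dx` under `x ↦ exp (-x)` tend
to those of Lebesgue measure on `[0, 1]`. So the tails of `φ` tend to `exp (-R)` for every `R ≥ 0`,
and uniformly on compact sets because they are monotone.
-/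

open scoped ENNReal Topology

/-- The points `(y, z)` such that merging a cluster of mass `z` into one of mass `y` carries mass
across the level `x`; the section in the variable `x` is `Ioo y (y + z)`. -/
def fluxRegion (x : ℝ) : Set (ℝ × ℝ) := {p | p.1 < x ∧ x < p.1 + p.2}

/-- The flux of mass across the level `x` in a population `μ` coagulating at rate `k`, which is the
right-hand side of the profile equation. It is an integral for the product measure with values in
`[0, ∞]`, so that it never takes a junk value. -/
noncomputable def massFlux (k : ℝ × ℝ → ℝ≥0∞) (μ : Measure ℝ) (x : ℝ) : ℝ≥0∞ :=
  ∫⁻ p in fluxRegion x, ENNReal.ofReal p.1 * k p ∂(μ.prod μ)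

/-- A rate kernel of at most linear growth in its second argument, locally uniformly in the first
one and away from the origin. -/
def SublinearAwayFromZero (k : ℝ × ℝ → ℝ≥0∞) : Prop :=
  ∀ c b : ℝ, 0 < c → ∃ C : ℝ≥0∞, C ≠ ⊤ ∧
    ∀ y ∈ Icc c b, ∀ z, c ≤ z → k (y, z) ≤ C * ENNReal.ofReal z

section MassFlux

variable {k : ℝ × ℝ → ℝ≥0∞} {μ ν : Measure ℝ}

theorem measurableSet_setOf_mem_fluxRegion :
    MeasurableSet {r : ℝ × ℝ × ℝ | r.2 ∈ fluxRegion r.1} :=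
  (measurableSet_lt (f := fun r : ℝ × ℝ × ℝ => r.2.1) (by fun_prop) measurable_fst).inter
    (measurableSet_lt (g := fun r : ℝ × ℝ × ℝ => r.2.1 + r.2.2) measurable_fst (by fun_prop))

theorem measurableSet_fluxRegion (x : ℝ) : MeasurableSet (fluxRegion x) :=
  measurable_prodMk_left measurableSet_setOf_mem_fluxRegion

theorem massFlux_eq_lintegral_indicator (k : ℝ × ℝ → ℝ≥0∞) (μ : Measure ℝ) (x : ℝ) :
    massFlux k μ x =
      ∫⁻ p, (fluxRegion x).indicator (fun p => ENNReal.ofReal p.1 * k p) p ∂(μ.prod μ) :=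
  (lintegral_indicator (measurableSet_fluxRegion x) _).symm

theorem aemeasurable_ofReal_fst_mul (hk : AEMeasurable k (μ.prod μ)) :
    AEMeasurable (fun p => ENNReal.ofReal p.1 * k p) (μ.prod μ) :=
  measurable_fst.ennreal_ofReal.aemeasurable.mul hk

theorem aemeasurable_indicator_fluxRegion (hk : AEMeasurable k (μ.prod μ)) :
    AEMeasurable (fun r : ℝ × ℝ × ℝ =>
      (fluxRegion r.1).indicator (fun p => ENNReal.ofReal p.1 * k p) r.2)
      (ν.prod (μ.prod μ)) :=
  ((aemeasurable_ofReal_fst_mul hk).comp_quasiMeasurePreserving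
    Measure.quasiMeasurePreserving_snd).indicator measurableSet_setOf_mem_fluxRegion

variable [SFinite μ]

theorem aemeasurable_massFlux (hk : AEMeasurable k (μ.prod μ)) :
    AEMeasurable (massFlux k μ) ν :=
  (aemeasurable_indicator_fluxRegion hk).lintegral_prod_right'.congr
    (.of_forall fun x => (massFlux_eq_lintegral_indicator k μ x).symm)

theorem lintegral_mul_massFlux [SFinite ν] (hk : AEMeasurable k (μ.prod μ)) {w : ℝ → ℝ≥0∞}
    (hw : Measurable w) :
    ∫⁻ x, w x * massFlux k μ x ∂ν =
      ∫⁻ p, ENNReal.ofReal p.1 * k p * ∫⁻ x in Ioo p.1 (p.1 + p.2), w x ∂ν ∂(μ.prod μ) := by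
  calc ∫⁻ x, w x * massFlux k μ x ∂ν
      = ∫⁻ x, ∫⁻ p, w x *
          (fluxRegion x).indicator (fun p => ENNReal.ofReal p.1 * k p) p ∂(μ.prod μ) ∂ν := by
        refine lintegral_congr fun x => ?_
        rw [massFlux_eq_lintegral_indicator]
        exact (lintegral_const_mul'' _
          ((aemeasurable_ofReal_fst_mul hk).indicator (measurableSet_fluxRegion x))).symm
    _ = ∫⁻ p, ∫⁻ x, w x *
          (fluxRegion x).indicator (fun p => ENNReal.ofReal p.1 * k p) p ∂ν ∂(μ.prod μ) :=
        lintegral_lintegral_swap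
          ((hw.comp measurable_fst).aemeasurable.mul (aemeasurable_indicator_fluxRegion hk))
    _ = _ := by
        refine lintegral_congr fun p => ?_
        rw [← lintegral_const_mul _ hw, ← lintegral_indicator measurableSet_Ioo]
        refine lintegral_congr fun x => ?_
        by_cases hx : x ∈ Ioo p.1 (p.1 + p.2)
        · rw [indicator_of_mem hx, indicator_of_mem (show p ∈ fluxRegion x from hx), mul_comm]
        · rw [indicator_of_notMem hx, indicator_of_notMem (show p ∉ fluxRegion x from hx),
            mul_zero]

end MassFlux

section Finiteness

variable {k : ℝ × ℝ → ℝ≥0∞} {μ : Measure ℝ}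

theorem ae_prod_pos (hpos : ∀ᵐ x ∂μ, 0 < x) : ∀ᵐ p ∂(μ.prod μ), 0 < p.1 ∧ 0 < p.2 :=
  (Measure.quasiMeasurePreserving_fst.ae hpos).and (Measure.quasiMeasurePreserving_snd.ae hpos)

variable [SFinite μ]

theorem lintegral_linear_majorant_ne_top (hm : ∫⁻ x, ENNReal.ofReal x ∂μ ≠ ⊤) {C : ℝ≥0∞}
    (hC : C ≠ ⊤) :
    ∫⁻ p, ENNReal.ofReal p.1 * (C * ENNReal.ofReal p.2) ∂(μ.prod μ) ≠ ⊤ := by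
  rw [lintegral_prod_mul (f := ENNReal.ofReal) (g := fun z => C * ENNReal.ofReal z)
    (by fun_prop) (by fun_prop), lintegral_const_mul _ (by fun_prop)]
  exact ENNReal.mul_ne_top hm (ENNReal.mul_ne_top hC hm)

/- Either some level `x₀ < c` has finite flux, and then only the part `y ≥ x₀` remains, where the
kernel is at most linear; or `μ` does not charge `(0, c)` at all. -/
theorem setLIntegral_Iio_prod_Ici_ne_top (hpos : ∀ᵐ x ∂μ, 0 < x)
    (hm : ∫⁻ x, ENNReal.ofReal x ∂μ ≠ ⊤) (hk : SublinearAwayFromZero k)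
    (hfin : ∀ᵐ x ∂μ, massFlux k μ x ≠ ⊤) {c : ℝ} :
    ∫⁻ p in Iio c ×ˢ Ici c, ENNReal.ofReal p.1 * k p ∂(μ.prod μ) ≠ ⊤ := by
  by_cases hc0 : μ (Iio c) = 0
  · rw [Measure.restrict_eq_zero.2 (by rw [Measure.prod_prod, hc0, zero_mul]),
      lintegral_zero_measure]
    exact ENNReal.zero_ne_top
  obtain ⟨x₀, hx₀c, hx₀, hflux⟩ :=
    ((frequently_ae_mem_iff.2 hc0).and_eventually (hpos.and hfin)).exists
  obtain ⟨C, hC, hkC⟩ := hk x₀ c hx₀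
  have hsub : (Iio c ×ˢ Ici c : Set (ℝ × ℝ)) ≤ᵐ[μ.prod μ]
      (fluxRegion x₀ ∪ Ico x₀ c ×ˢ Ici c : Set (ℝ × ℝ)) := by
    filter_upwards [ae_prod_pos hpos] with p hp hpc
    rcases lt_or_ge p.1 x₀ with h | h
    · exact Or.inl ⟨h, by linarith [show x₀ < c from hx₀c, show c ≤ p.2 from hpc.2, hp.1]⟩
    · exact Or.inr ⟨⟨h, hpc.1⟩, hpc.2⟩
  have hlin : ∫⁻ p in Ico x₀ c ×ˢ Ici c, ENNReal.ofReal p.1 * k p ∂(μ.prod μ) ≠ ⊤ := by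
    refine ne_top_of_le_ne_top (lintegral_linear_majorant_ne_top hm hC) ?_
    refine (setLIntegral_mono' (measurableSet_Ico.prod measurableSet_Ici) fun p hp => ?_).trans
      (setLIntegral_le_lintegral _ _)
    gcongr
    exact hkC p.1 ⟨hp.1.1, hp.1.2.le⟩ p.2 ((show x₀ < c from hx₀c).le.trans hp.2)
  exact ne_top_of_le_ne_top (ENNReal.add_ne_top.2 ⟨hflux, hlin⟩)
    ((lintegral_mono' (Measure.restrict_mono_ae hsub) le_rfl).trans (lintegral_union_le _ _ _))

/- With `c = a / 2`, the interval `(y, y + z)` misses `[a, b]` unless `y` or `z` is at least `c`; in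
the case `z < c ≤ y` its length `z` makes up for the singularity of `k` after exchanging `y` and
`z`. -/
theorem mul_volume_Ioo_inter_Icc_le {a b y z : ℝ} {C : ℝ≥0∞} (hy : 0 < y)
    (hsymm : k (z, y) = k (y, z))
    (hkC : ∀ y ∈ Icc (a / 2) b, ∀ z, a / 2 ≤ z → k (y, z) ≤ C * ENNReal.ofReal z) :
    ENNReal.ofReal y * k (y, z) * volume (Ioo y (y + z) ∩ Icc a b) ≤ ENNReal.ofReal b *
      ((Iio (a / 2) ×ˢ Ici (a / 2)).indicator (fun p => ENNReal.ofReal p.1 * k p) (y, z) +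
        (Iio (a / 2) ×ˢ Ici (a / 2)).indicator (fun p => ENNReal.ofReal p.1 * k p) (z, y) +
        ENNReal.ofReal y * (C * ENNReal.ofReal z)) := by
  rcases (Ioo y (y + z) ∩ Icc a b).eq_empty_or_nonempty with hempty | ⟨x, hx, hxab⟩
  · simp only [hempty, measure_empty, mul_zero, zero_le]
  have hyb : y ≤ b := hx.1.le.trans hxab.2
  have hvol_b : volume (Ioo y (y + z) ∩ Icc a b) ≤ ENNReal.ofReal b := by
    refine (measure_mono fun t ht => ⟨hy.trans ht.1.1, ht.2.2⟩ : _ ≤ volume (Ioc 0 b)).trans ?_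
    rw [Real.volume_Ioc, sub_zero]
  have hvol_z : volume (Ioo y (y + z) ∩ Icc a b) ≤ ENNReal.ofReal z := by
    refine (measure_mono inter_subset_left).trans ?_
    rw [Real.volume_Ioo, add_sub_cancel_left]
  rw [mul_comm (ENNReal.ofReal b)]
  rcases lt_or_ge y (a / 2) with hya | hya
  · have hza : a / 2 ≤ z := by linarith [hx.2, hxab.1]
    rw [indicator_of_mem (show (y, z) ∈ Iio (a / 2) ×ˢ Ici (a / 2) from ⟨hya, hza⟩), add_assoc]
    exact mul_le_mul' le_self_add hvol_b
  rcases lt_or_ge z (a / 2) with hza | hza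
  · rw [indicator_of_mem (show (z, y) ∈ Iio (a / 2) ×ˢ Ici (a / 2) from ⟨hza, hya⟩), hsymm]
    calc ENNReal.ofReal y * k (y, z) * volume (Ioo y (y + z) ∩ Icc a b)
        ≤ ENNReal.ofReal b * k (y, z) * ENNReal.ofReal z := by gcongr
      _ = ENNReal.ofReal z * k (y, z) * ENNReal.ofReal b := by ring
      _ ≤ _ := by gcongr; exact le_add_self.trans le_self_add
  · refine mul_le_mul' ((mul_le_mul_right ?_ _).trans le_add_self) hvol_b
    exact hkC y ⟨hya, hyb⟩ z hza

theorem setLIntegral_Icc_massFlux_ne_top (hpos : ∀ᵐ x ∂μ, 0 < x)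
    (hm : ∫⁻ x, ENNReal.ofReal x ∂μ ≠ ⊤) (hk_meas : AEMeasurable k (μ.prod μ))
    (hk_symm : k ∘ Prod.swap =ᵐ[μ.prod μ] k) (hk : SublinearAwayFromZero k)
    (hfin : ∀ᵐ x ∂μ, massFlux k μ x ≠ ⊤) {a : ℝ} (ha : 0 < a) (b : ℝ) :
    ∫⁻ x in Icc a b, massFlux k μ x ≠ ⊤ := by
  obtain ⟨C, hC, hkC⟩ := hk (a / 2) b (half_pos ha)
  set cross : ℝ × ℝ → ℝ≥0∞ :=
    (Iio (a / 2) ×ˢ Ici (a / 2)).indicator fun p => ENNReal.ofReal p.1 * k p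
  have hcross_meas : AEMeasurable cross (μ.prod μ) :=
    (aemeasurable_ofReal_fst_mul hk_meas).indicator (measurableSet_Iio.prod measurableSet_Ici)
  have hcross_fin : ∫⁻ p, cross p ∂(μ.prod μ) ≠ ⊤ := by
    rw [lintegral_indicator (measurableSet_Iio.prod measurableSet_Ici)]
    exact setLIntegral_Iio_prod_Ici_ne_top hpos hm hk hfin
  have hbound : ∀ᵐ p ∂(μ.prod μ),
      ENNReal.ofReal p.1 * k p * volume (Ioo p.1 (p.1 + p.2) ∩ Icc a b) ≤
        ENNReal.ofReal b * (cross p + cross p.swap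
          + ENNReal.ofReal p.1 * (C * ENNReal.ofReal p.2)) := by
    filter_upwards [ae_prod_pos hpos, hk_symm] with p ⟨hy, _⟩ hsymm
    exact mul_volume_Ioo_inter_Icc_le hy hsymm hkC
  have hsum : ∫⁻ p, ENNReal.ofReal b * (cross p + cross p.swap
      + ENNReal.ofReal p.1 * (C * ENNReal.ofReal p.2)) ∂(μ.prod μ) ≠ ⊤ := by
    rw [lintegral_const_mul' _ _ ENNReal.ofReal_ne_top, lintegral_add_right _ (by fun_prop),
      lintegral_add_left' hcross_meas, lintegral_prod_swap]
    exact ENNReal.mul_ne_top ENNReal.ofReal_ne_top (ENNReal.add_ne_top.2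
      ⟨ENNReal.add_ne_top.2 ⟨hcross_fin, hcross_fin⟩, lintegral_linear_majorant_ne_top hm hC⟩)
  have hflux := lintegral_mul_massFlux (ν := volume.restrict (Icc a b)) hk_meas
    (measurable_const (a := (1 : ℝ≥0∞)))
  simp only [one_mul, setLIntegral_one, Measure.restrict_apply measurableSet_Ioo] at hflux
  rw [hflux]
  exact ne_top_of_le_ne_top hsum (lintegral_mono_ae hbound)

theorem ae_massFlux_ne_top (hpos : ∀ᵐ x ∂μ, 0 < x)
    (hm : ∫⁻ x, ENNReal.ofReal x ∂μ ≠ ⊤) (hk_meas : AEMeasurable k (μ.prod μ))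
    (hk_symm : k ∘ Prod.swap =ᵐ[μ.prod μ] k) (hk : SublinearAwayFromZero k)
    (hfin : ∀ᵐ x ∂μ, massFlux k μ x ≠ ⊤) :
    ∀ᵐ x ∂(volume.restrict (Ioi (0 : ℝ))), massFlux k μ x ≠ ⊤ := by
  have hcover : Ioi (0 : ℝ) = ⋃ n : ℕ, Icc ((n : ℝ) + 1)⁻¹ n := by
    ext x
    simp only [mem_Ioi, mem_iUnion, mem_Icc]
    refine ⟨fun hx => ?_, fun ⟨n, hn, _⟩ => lt_of_lt_of_le (by positivity) hn⟩
    obtain ⟨n, hn⟩ := exists_nat_ge (max x x⁻¹)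
    refine ⟨n, inv_le_of_inv_le₀ hx ?_, (le_max_left _ _).trans hn⟩
    linarith [(le_max_right x x⁻¹).trans hn]
  rw [hcover, ae_restrict_iUnion_iff]
  intro n
  filter_upwards [ae_lt_top' (aemeasurable_massFlux hk_meas)
    (setLIntegral_Icc_massFlux_ne_top hpos hm hk_meas hk_symm hk hfin
      (by positivity : 0 < ((n : ℝ) + 1)⁻¹) n)] with x hx using hx.ne

end Finiteness

section Kernel

/-- A symmetric rate kernel within `ε` of the constant kernel `2`, where the deviation may have a
singularity of order `α` as the ratio of the masses tends to `0` or `∞`. Only the values on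
`(0, ∞)²` matter. -/
structure IsNearTwo (α ε : ℝ) (K : ℝ → ℝ → ℝ) : Prop where
  aemeasurable : AEMeasurable (fun p : ℝ × ℝ => K p.1 p.2) (volume.restrict (Ioi 0 ×ˢ Ioi 0))
  symm : ∀ y z : ℝ, 0 < y → 0 < z → K z y = K y z
  two_le : ∀ y z : ℝ, 0 < y → 0 < z → 2 ≤ K y z
  le : ∀ y z : ℝ, 0 < y → 0 < z → K y z ≤ 2 + ε * ((y / z) ^ α + (z / y) ^ α)

theorem GoodW.isNearTwo {α ε : ℝ} {W : ℝ → ℝ → ℝ} (hW : GoodW α W) (hε : 0 ≤ ε) :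
    IsNearTwo α ε (Kern ε W) := by
  obtain ⟨hcont, hsymm, -, hbound⟩ := hW
  refine ⟨?_, fun y z hy hz => ?_, fun y z hy hz => ?_, fun y z hy hz => ?_⟩
  · exact ((hcont.aemeasurable (measurableSet_Ioi.prod measurableSet_Ioi)).const_mul ε).const_add 2
  · rw [Kern, Kern, hsymm z y hz hy]
  · exact le_add_of_nonneg_right (mul_nonneg hε (hbound y z hy hz).1)
  · exact add_le_add_right (mul_le_mul_of_nonneg_left (hbound y z hy hz).2 hε) 2

variable {α ε : ℝ} {K : ℝ → ℝ → ℝ}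

theorem IsNearTwo.nonneg_deviation (hK : IsNearTwo α ε K) : 0 ≤ ε := by
  have h := (hK.two_le 1 1 one_pos one_pos).trans (hK.le 1 1 one_pos one_pos)
  simp only [div_one, one_rpow] at h
  linarith

theorem IsNearTwo.sublinearAwayFromZero (hα : α ∈ Icc (0 : ℝ) 1) (hK : IsNearTwo α ε K) :
    SublinearAwayFromZero fun p => ENNReal.ofReal (K p.1 p.2) := by
  intro c b hc
  refine ⟨ENNReal.ofReal ((2 + ε * ((b / c) ^ α + 1)) / c), ENNReal.ofReal_ne_top,
    fun y hy z hz => ?_⟩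
  have hy₀ : 0 < y := hc.trans_le hy.1
  have hz₀ : 0 < z := hc.trans_le hz
  have hε := hK.nonneg_deviation
  have hzc : 1 ≤ z / c := (one_le_div hc).2 hz
  have hyz : (y / z) ^ α ≤ (b / c) ^ α :=
    rpow_le_rpow (by positivity) (div_le_div₀ (hy₀.le.trans hy.2) hy.2 hc hz) hα.1
  have hzy : (z / y) ^ α ≤ z / c :=
    calc (z / y) ^ α ≤ (z / c) ^ α :=
          rpow_le_rpow (by positivity) (div_le_div_of_nonneg_left hz₀.le hc hy.1) hα.1
      _ ≤ (z / c) ^ (1 : ℝ) := rpow_le_rpow_of_exponent_le hzc hα.2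
      _ = z / c := rpow_one _
  have hbc : 0 ≤ (b / c) ^ α := le_trans (by positivity) hyz
  rw [← ENNReal.ofReal_mul' hz₀.le]
  refine ENNReal.ofReal_le_ofReal ?_
  calc K y z ≤ 2 + ε * ((y / z) ^ α + (z / y) ^ α) := hK.le y z hy₀ hz₀
    _ ≤ 2 * (z / c) + ε * ((b / c) ^ α * (z / c) + z / c) := by
        gcongr
        · linarith
        · exact hyz.trans (le_mul_of_one_le_right hbc hzc)
    _ = (2 + ε * ((b / c) ^ α + 1)) / c * z := by ring

end Kernel

section ProfileMeasure

/-- The measure on `(0, ∞)` with density `φ`, as a measure on `ℝ`. -/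
noncomputable def profileMeasure (φ : ℝ → ℝ) : Measure ℝ :=
  (volume.restrict (Ioi 0)).withDensity fun x => ENNReal.ofReal (φ x)

instance (φ : ℝ → ℝ) : SFinite (profileMeasure φ) :=
  inferInstanceAs (SFinite ((volume.restrict (Ioi 0)).withDensity _))

variable {φ : ℝ → ℝ}

theorem profileMeasure_absolutelyContinuous : profileMeasure φ ≪ volume.restrict (Ioi 0) :=
  withDensity_absolutelyContinuous _ _

theorem ae_profileMeasure_pos : ∀ᵐ x ∂(profileMeasure φ), 0 < x :=
  profileMeasure_absolutelyContinuous.ae_le (ae_restrict_mem measurableSet_Ioi)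

theorem lintegral_profileMeasure (hφ : AEMeasurable φ (volume.restrict (Ioi 0))) {f : ℝ → ℝ≥0∞}
    (hf : AEMeasurable f (volume.restrict (Ioi 0))) :
    ∫⁻ x, f x ∂(profileMeasure φ) = ∫⁻ x in Ioi 0, ENNReal.ofReal (φ x) * f x :=
  lintegral_withDensity_eq_lintegral_mul₀ hφ.ennreal_ofReal hf

theorem setIntegral_profileMeasure (hφ : AEMeasurable φ (volume.restrict (Ioi 0)))
    (hφ₀ : ∀ᵐ x ∂(volume.restrict (Ioi (0 : ℝ))), 0 ≤ φ x) {s : Set ℝ} (hs : s ⊆ Ioi 0)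
    (hs_meas : MeasurableSet s) (f : ℝ → ℝ) :
    ∫ x in s, f x ∂(profileMeasure φ) = ∫ x in s, φ x * f x := by
  have hle := Measure.restrict_mono hs (le_refl (volume : Measure ℝ))
  rw [profileMeasure, restrict_withDensity hs_meas, Measure.restrict_restrict hs_meas,
    inter_eq_left.2 hs, integral_withDensity_eq_integral_toReal_smul₀
      (hφ.mono_measure hle).ennreal_ofReal (.of_forall fun _ => ENNReal.ofReal_lt_top)]
  refine integral_congr_ae ?_
  filter_upwards [hφ₀.filter_mono (ae_mono hle)] with x hx
  rw [ENNReal.toReal_ofReal hx, smul_eq_mul]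

theorem profileMeasure_real_apply (hφ : AEMeasurable φ (volume.restrict (Ioi 0)))
    (hφ₀ : ∀ᵐ x ∂(volume.restrict (Ioi (0 : ℝ))), 0 ≤ φ x) {s : Set ℝ} (hs : s ⊆ Ioi 0)
    (hs_meas : MeasurableSet s) :
    (profileMeasure φ).real s = ∫ x in s, φ x := by
  simpa using setIntegral_profileMeasure hφ hφ₀ hs hs_meas fun _ => 1

theorem IsProfile.aemeasurable {K : ℝ → ℝ → ℝ} (h : IsProfile K φ) :
    AEMeasurable φ (volume.restrict (Ioi 0)) :=
  (h.1.aestronglyMeasurable).aemeasurable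

theorem IsProfile.lintegral_ofReal_eq_one {K : ℝ → ℝ → ℝ} (h : IsProfile K φ)
    (h₁ : IsNormalised φ) : ∫⁻ x, ENNReal.ofReal x ∂(profileMeasure φ) = 1 := by
  rw [lintegral_profileMeasure h.aemeasurable (by fun_prop)]
  have hnonneg : ∀ᵐ x ∂(volume.restrict (Ioi (0 : ℝ))), 0 ≤ x * φ x := by
    filter_upwards [h.2.1, ae_restrict_mem measurableSet_Ioi] with x hφx hx
    exact mul_nonneg hx.le hφx
  rw [← ENNReal.ofReal_one, ← h₁, ofReal_integral_eq_lintegral_ofReal h.2.2.1 hnonneg]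
  refine setLIntegral_congr_fun measurableSet_Ioi fun x hx => ?_
  rw [mul_comm, ENNReal.ofReal_mul (show (0 : ℝ) ≤ x from hx.le)]

end ProfileMeasure

section ProfileEquation

theorem integral_integral_toReal {β γ : Type*} [MeasurableSpace β] [MeasurableSpace γ]
    {μ : Measure β} {ν : Measure γ} [SFinite ν] {f : β × γ → ℝ≥0∞}
    (hf : AEMeasurable f (μ.prod ν)) (hfin : ∀ᵐ y ∂μ, ∫⁻ z, f (y, z) ∂ν ≠ ⊤) :
    ∫ y, ∫ z, (f (y, z)).toReal ∂ν ∂μ = (∫⁻ p, f p ∂(μ.prod ν)).toReal := by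
  rw [lintegral_prod _ hf, ← integral_toReal hf.lintegral_prod_right'
    (hfin.mono fun _ => lt_top_iff_ne_top.2)]
  refine integral_congr_ae ?_
  filter_upwards [hfin, hf.aestronglyMeasurable.prodMk_left] with y hy hmeas
  exact integral_toReal hmeas.aemeasurable (ae_lt_top' hmeas.aemeasurable hy)

variable {φ : ℝ → ℝ} {α ε : ℝ} {K : ℝ → ℝ → ℝ}

theorem IsNearTwo.aemeasurable_ofReal (hK : IsNearTwo α ε K) {μ : Measure ℝ}
    (hμ : μ ≪ volume.restrict (Ioi 0)) :
    AEMeasurable (fun p : ℝ × ℝ => ENNReal.ofReal (K p.1 p.2)) (μ.prod μ) := by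
  refine hK.aemeasurable.ennreal_ofReal.mono_ac ?_
  rw [Measure.volume_eq_prod, ← Measure.prod_restrict]
  exact hμ.prod hμ

theorem IsNearTwo.ofReal_comp_swap (hK : IsNearTwo α ε K) {μ : Measure ℝ}
    (hpos : ∀ᵐ x ∂μ, 0 < x) :
    (fun p : ℝ × ℝ => ENNReal.ofReal (K p.1 p.2)) ∘ Prod.swap =ᵐ[μ.prod μ]
      fun p => ENNReal.ofReal (K p.1 p.2) := by
  filter_upwards [ae_prod_pos hpos] with p hp
  exact congrArg ENNReal.ofReal (hK.symm p.1 p.2 hp.1 hp.2)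

theorem ae_lintegral_indicator_fluxRegion_ne_top {k : ℝ × ℝ → ℝ≥0∞} {μ : Measure ℝ}
    (hpos : ∀ᵐ x ∂μ, 0 < x) (hm : ∫⁻ x, ENNReal.ofReal x ∂μ ≠ ⊤) (hk : SublinearAwayFromZero k)
    (x : ℝ) :
    ∀ᵐ y ∂μ, ∫⁻ z, (fluxRegion x).indicator (fun p => ENNReal.ofReal p.1 * k p) (y, z) ∂μ ≠ ⊤ := by
  filter_upwards [hpos] with y hy
  rcases le_or_gt x y with hxy | hxy
  · simp [fluxRegion, hxy.not_gt]
  obtain ⟨C, hC, hkC⟩ := hk (min y (x - y)) x (lt_min hy (sub_pos.2 hxy))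
  have hfin : ∫⁻ z, ENNReal.ofReal y * (C * ENNReal.ofReal z) ∂μ ≠ ⊤ := by
    rw [lintegral_const_mul _ (by fun_prop), lintegral_const_mul _ (by fun_prop)]
    exact ENNReal.mul_ne_top ENNReal.ofReal_ne_top (ENNReal.mul_ne_top hC hm)
  refine ne_top_of_le_ne_top hfin (lintegral_mono fun z => ?_)
  by_cases hp : (y, z) ∈ fluxRegion x
  · rw [indicator_of_mem hp]
    gcongr
    exact hkC y ⟨min_le_left _ _, hxy.le⟩ z
      ((min_le_right _ _).trans (sub_left_le_of_le_add hp.2.le))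
  · rw [indicator_of_notMem hp]
    exact zero_le

theorem IsNearTwo.integral_toReal_indicator_fluxRegion (hK : IsNearTwo α ε K) {μ : Measure ℝ}
    (hpos : ∀ᵐ x ∂μ, 0 < x) (x : ℝ) {y : ℝ} (hy : 0 < y) :
    ∫ z, ((fluxRegion x).indicator
        (fun p => ENNReal.ofReal p.1 * ENNReal.ofReal (K p.1 p.2)) (y, z)).toReal ∂μ =
      (Ioo 0 x).indicator (fun y => ∫ z in Ioi (x - y), y * K y z ∂μ) y := by
  rcases lt_or_ge y x with hyx | hyx
  · rw [indicator_of_mem (show y ∈ Ioo 0 x from ⟨hy, hyx⟩), ← integral_indicator measurableSet_Ioi]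
    refine integral_congr_ae ?_
    filter_upwards [hpos] with z hz
    by_cases hxz : x < y + z
    · rw [indicator_of_mem (show z ∈ Ioi (x - y) from sub_left_lt_of_lt_add hxz),
        indicator_of_mem (show (y, z) ∈ fluxRegion x from ⟨hyx, hxz⟩), ENNReal.toReal_mul,
        ENNReal.toReal_ofReal hy.le,
        ENNReal.toReal_ofReal (zero_le_two.trans (hK.two_le y z hy hz))]
    · rw [indicator_of_notMem (show z ∉ Ioi (x - y) from fun h => hxz (lt_add_of_sub_left_lt h)),
        indicator_of_notMem (show (y, z) ∉ fluxRegion x from fun h => hxz h.2), ENNReal.toReal_zero]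
  · simp [fluxRegion, hyx.not_gt]

theorem IsProfile.sq_mul_eq_toReal_massFlux (hα : α ∈ Icc (0 : ℝ) 1) (hK : IsNearTwo α ε K)
    (h : IsProfile K φ) (hm : ∫⁻ x, ENNReal.ofReal x ∂(profileMeasure φ) ≠ ⊤) :
    ∀ᵐ x ∂(volume.restrict (Ioi 0)), x ^ 2 * φ x =
      (massFlux (fun p => ENNReal.ofReal (K p.1 p.2)) (profileMeasure φ) x).toReal := by
  filter_upwards [h.2.2.2] with x hx
  rw [hx, massFlux_eq_lintegral_indicator, ← integral_integral_toReal
    ((aemeasurable_ofReal_fst_mul (hK.aemeasurable_ofReal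
      profileMeasure_absolutelyContinuous)).indicator (measurableSet_fluxRegion x))
    (ae_lintegral_indicator_fluxRegion_ne_top ae_profileMeasure_pos hm
      (hK.sublinearAwayFromZero hα) x)]
  calc ∫ y in Ioo 0 x, ∫ z in Ioi (x - y), y * K y z * φ y * φ z
      = ∫ y in Ioo 0 x, φ y * ∫ z in Ioi (x - y), y * K y z ∂(profileMeasure φ) := by
        refine setIntegral_congr_fun measurableSet_Ioo fun y hy => ?_
        rw [setIntegral_profileMeasure h.aemeasurable h.2.1
          (Ioi_subset_Ioi (sub_nonneg.2 hy.2.le)) measurableSet_Ioi, ← integral_const_mul]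
        congr 1 with z
        ring
    _ = ∫ y in Ioo 0 x, ∫ z in Ioi (x - y), y * K y z ∂(profileMeasure φ) ∂(profileMeasure φ) :=
        (setIntegral_profileMeasure h.aemeasurable h.2.1 Ioo_subset_Ioi_self measurableSet_Ioo
          _).symm
    _ = _ := by
        rw [← integral_indicator measurableSet_Ioo]
        refine integral_congr_ae ?_
        filter_upwards [ae_profileMeasure_pos] with y hy
        exact (hK.integral_toReal_indicator_fluxRegion ae_profileMeasure_pos x hy).symm

/- Where the flux is infinite the profile equation reads `x ^ 2 * φ x = 0`, by the junk value of
the integral; so `μ` does not charge this set, and a posteriori it is a null set. -/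
theorem IsProfile.massFlux_ae_eq (hα : α ∈ Icc (0 : ℝ) 1) (hK : IsNearTwo α ε K)
    (h : IsProfile K φ) (hm : ∫⁻ x, ENNReal.ofReal x ∂(profileMeasure φ) ≠ ⊤) :
    ∀ᵐ x ∂(volume.restrict (Ioi 0)), ENNReal.ofReal (φ x) * ENNReal.ofReal (x ^ 2) =
      massFlux (fun p => ENNReal.ofReal (K p.1 p.2)) (profileMeasure φ) x := by
  have heq := h.sq_mul_eq_toReal_massFlux hα hK hm
  have hcharged : ∀ᵐ x ∂(profileMeasure φ),
      massFlux (fun p => ENNReal.ofReal (K p.1 p.2)) (profileMeasure φ) x ≠ ⊤ := by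
    rw [profileMeasure, ae_withDensity_iff' h.aemeasurable.ennreal_ofReal, ← profileMeasure]
    filter_upwards [heq, ae_restrict_mem measurableSet_Ioi] with x hx hx₀ hφx htop
    rw [htop, ENNReal.toReal_top] at hx
    have : φ x = 0 := (mul_eq_zero.1 hx).resolve_left (pow_pos hx₀ 2).ne'
    exact hφx (by rw [this, ENNReal.ofReal_zero])
  filter_upwards [heq, h.2.1, ae_massFlux_ne_top ae_profileMeasure_pos hm
    (hK.aemeasurable_ofReal profileMeasure_absolutelyContinuous)
    (hK.ofReal_comp_swap ae_profileMeasure_pos) (hK.sublinearAwayFromZero hα) hcharged]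
    with x hx hφx hfin
  rw [← ENNReal.ofReal_mul hφx, mul_comm, hx, ENNReal.ofReal_toReal hfin]

theorem IsProfile.lintegral_mul_sq (hα : α ∈ Icc (0 : ℝ) 1) (hK : IsNearTwo α ε K)
    (h : IsProfile K φ) (hm : ∫⁻ x, ENNReal.ofReal x ∂(profileMeasure φ) ≠ ⊤) {w : ℝ → ℝ≥0∞}
    (hw : Measurable w) :
    ∫⁻ x, w x * ENNReal.ofReal (x ^ 2) ∂(profileMeasure φ) =
      ∫⁻ x in Ioi 0, w x *
        massFlux (fun p => ENNReal.ofReal (K p.1 p.2)) (profileMeasure φ) x := by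
  rw [lintegral_profileMeasure h.aemeasurable (by fun_prop)]
  refine lintegral_congr_ae ?_
  filter_upwards [h.massFlux_ae_eq hα hK hm] with x hx
  rw [← hx, mul_left_comm]

end ProfileEquation

/-- The weak form of the equation of a normalised self-similar profile: `μ` is a measure of first
moment `1` on `(0, ∞)` for which `x² μ(dx)` has density `massFlux`. -/
structure IsWeakProfile (K : ℝ → ℝ → ℝ) (μ : Measure ℝ) : Prop where
  absolutelyContinuous : μ ≪ volume.restrict (Ioi 0)
  lintegral_ofReal : ∫⁻ x, ENNReal.ofReal x ∂μ = 1
  lintegral_mul_sq : ∀ w : ℝ → ℝ≥0∞, Measurable w →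
    ∫⁻ x, w x * ENNReal.ofReal (x ^ 2) ∂μ =
      ∫⁻ x in Ioi 0, w x * massFlux (fun p => ENNReal.ofReal (K p.1 p.2)) μ x

theorem IsProfile.isWeakProfile_profileMeasure {φ : ℝ → ℝ} {α ε : ℝ} {K : ℝ → ℝ → ℝ}
    (h : IsProfile K φ) (h₁ : IsNormalised φ) (hα : α ∈ Icc (0 : ℝ) 1) (hK : IsNearTwo α ε K) :
    IsWeakProfile K (profileMeasure φ) :=
  ⟨profileMeasure_absolutelyContinuous, h.lintegral_ofReal_eq_one h₁, fun _ hw =>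
    h.lintegral_mul_sq hα hK (h.lintegral_ofReal_eq_one h₁ ▸ ENNReal.one_ne_top) hw⟩

theorem IsWeakProfile.ae_pos {K : ℝ → ℝ → ℝ} {μ : Measure ℝ} (hμ : IsWeakProfile K μ) :
    ∀ᵐ x ∂μ, 0 < x :=
  hμ.absolutelyContinuous.ae_le (ae_restrict_mem measurableSet_Ioi)

section LaplaceIdentity

theorem mul_exp_neg_le_one_sub_exp_neg (t : ℝ) : t * exp (-t) ≤ 1 - exp (-t) := by
  have h := mul_le_mul_of_nonneg_right (add_one_le_exp t) (exp_pos (-t)).le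
  rw [← exp_add, add_neg_cancel, exp_zero] at h
  linarith

theorem one_sub_exp_neg_le_self (t : ℝ) : 1 - exp (-t) ≤ t := by
  linarith [one_sub_le_exp_neg t]

theorem one_sub_exp_neg_nonneg {t : ℝ} (ht : 0 ≤ t) : 0 ≤ 1 - exp (-t) :=
  sub_nonneg.2 (exp_le_one_iff.2 (neg_nonpos.2 ht))

/-- The test function against which the profile equation is integrated; it is the derivative of
`x ↦ -(1 - exp (-(q * x))) / x`, so that its integral over `(y, y + z)` is explicit. -/
noncomputable def laplaceWeight (q x : ℝ) : ℝ :=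
  (1 - exp (-(q * x)) - q * x * exp (-(q * x))) / x ^ 2

theorem laplaceWeight_nonneg (q x : ℝ) : 0 ≤ laplaceWeight q x :=
  div_nonneg (sub_nonneg.2 (mul_exp_neg_le_one_sub_exp_neg (q * x))) (sq_nonneg x)

@[fun_prop]
theorem measurable_laplaceWeight (q : ℝ) : Measurable (laplaceWeight q) := by
  unfold laplaceWeight
  fun_prop

theorem hasDerivAt_laplaceWeight (q : ℝ) {x : ℝ} (hx : x ≠ 0) :
    HasDerivAt (fun x => -((1 - exp (-(q * x))) / x)) (laplaceWeight q x) x := by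
  have hexp : HasDerivAt (fun x => 1 - exp (-(q * x))) (q * exp (-(q * x))) x := by
    simpa [mul_comm] using (((hasDerivAt_id x).const_mul q).neg.exp).const_sub 1
  refine (hexp.fun_div (hasDerivAt_id' x) hx).fun_neg.congr_deriv ?_
  rw [laplaceWeight, ← neg_div]
  ring

theorem intervalIntegrable_laplaceWeight (q : ℝ) {a b : ℝ} (ha : 0 < a) (hab : a ≤ b) :
    IntervalIntegrable (laplaceWeight q) volume a b := by
  refine ContinuousOn.intervalIntegrable_of_Icc hab ?_
  exact ContinuousOn.div (by fun_prop) (by fun_prop) fun x hx =>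
    pow_ne_zero 2 (ha.trans_le hx.1).ne'

theorem integral_laplaceWeight (q : ℝ) {a b : ℝ} (ha : 0 < a) (hab : a ≤ b) :
    ∫ x in a..b, laplaceWeight q x = (1 - exp (-(q * a))) / a - (1 - exp (-(q * b))) / b := by
  rw [intervalIntegral.integral_eq_sub_of_hasDerivAt
    (fun x hx => hasDerivAt_laplaceWeight q (ha.trans_le (uIcc_of_le hab ▸ hx).1).ne')
    (intervalIntegrable_laplaceWeight q ha hab), neg_sub_neg]

theorem setLIntegral_Ioo_laplaceWeight (q : ℝ) {a b : ℝ} (ha : 0 < a) (hab : a ≤ b) :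
    ∫⁻ x in Ioo a b, ENNReal.ofReal (laplaceWeight q x) =
      ENNReal.ofReal ((1 - exp (-(q * a))) / a - (1 - exp (-(q * b))) / b) := by
  rw [Measure.restrict_congr_set Ioo_ae_eq_Ioc, ← ofReal_integral_eq_lintegral_ofReal
    ((intervalIntegrable_iff_integrableOn_Ioc_of_le hab).1
      (intervalIntegrable_laplaceWeight q ha hab)) (.of_forall (laplaceWeight_nonneg q)),
    ← intervalIntegral.integral_of_le hab, integral_laplaceWeight q ha hab]

theorem antitoneOn_one_sub_exp_neg_div (q : ℝ) :
    AntitoneOn (fun x => (1 - exp (-(q * x))) / x) (Ioi 0) := fun _ ha _ _ hab =>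
  sub_nonneg.1 (integral_laplaceWeight q ha hab ▸
    intervalIntegral.integral_nonneg hab fun x _ => laplaceWeight_nonneg q x)

/- The product on the right comes from `ψ y + ψ z - ψ (y + z) = ψ y * ψ z` for
`ψ y = 1 - exp (-(q * y))`. -/
theorem laplaceWeight_symmetrised (q : ℝ) {y z : ℝ} (hy : 0 < y) (hz : 0 < z) :
    y * ((1 - exp (-(q * y))) / y - (1 - exp (-(q * (y + z)))) / (y + z)) +
        z * ((1 - exp (-(q * z))) / z - (1 - exp (-(q * (z + y)))) / (z + y)) =
      (1 - exp (-(q * y))) * (1 - exp (-(q * z))) := by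
  have hsum : exp (-(q * (y + z))) = exp (-(q * y)) * exp (-(q * z)) := by
    rw [← exp_add]; ring_nf
  rw [add_comm z y, hsum]
  field_simp
  ring

variable {μ : Measure ℝ} [SFinite μ] {α ε : ℝ} {K : ℝ → ℝ → ℝ}

theorem two_mul_lintegral_prod_self {f : ℝ × ℝ → ℝ≥0∞} (hf : AEMeasurable f (μ.prod μ)) :
    2 * ∫⁻ p, f p ∂(μ.prod μ) = ∫⁻ p, f p + f p.swap ∂(μ.prod μ) := by
  rw [lintegral_add_left' hf, lintegral_prod_swap, two_mul]

theorem IsWeakProfile.lintegral_laplaceWeight (hμ : IsWeakProfile K μ) (hK : IsNearTwo α ε K)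
    (q : ℝ) :
    ∫⁻ x, ENNReal.ofReal (1 - exp (-(q * x)) - q * x * exp (-(q * x))) ∂μ =
      ∫⁻ p, ENNReal.ofReal (K p.1 p.2) * ENNReal.ofReal (p.1 *
        ((1 - exp (-(q * p.1))) / p.1 - (1 - exp (-(q * (p.1 + p.2)))) / (p.1 + p.2)))
        ∂(μ.prod μ) := by
  calc ∫⁻ x, ENNReal.ofReal (1 - exp (-(q * x)) - q * x * exp (-(q * x))) ∂μ
      = ∫⁻ x, ENNReal.ofReal (laplaceWeight q x) * ENNReal.ofReal (x ^ 2) ∂μ := by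
        refine lintegral_congr_ae ?_
        filter_upwards [hμ.ae_pos] with x hx
        rw [← ENNReal.ofReal_mul' (sq_nonneg x), laplaceWeight,
          div_mul_cancel₀ _ (pow_pos hx 2).ne']
    _ = ∫⁻ p, ENNReal.ofReal p.1 * ENNReal.ofReal (K p.1 p.2) * ∫⁻ x in Ioo p.1 (p.1 + p.2),
          ENNReal.ofReal (laplaceWeight q x) ∂(volume.restrict (Ioi 0)) ∂(μ.prod μ) := by
        rw [hμ.lintegral_mul_sq _ (by fun_prop), lintegral_mul_massFlux
          (hK.aemeasurable_ofReal hμ.absolutelyContinuous) (by fun_prop)]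
    _ = _ := by
        refine lintegral_congr_ae ?_
        filter_upwards [ae_prod_pos hμ.ae_pos] with p ⟨hy, hz⟩
        have hsub : Ioo p.1 (p.1 + p.2) ⊆ Ioi 0 := fun x hx => hy.trans hx.1
        rw [Measure.restrict_restrict measurableSet_Ioo, inter_eq_left.2 hsub,
          setLIntegral_Ioo_laplaceWeight q hy (le_add_of_nonneg_right hz.le), mul_right_comm,
          ← ENNReal.ofReal_mul hy.le, mul_comm]

theorem IsWeakProfile.laplace_identity (hμ : IsWeakProfile K μ) (hK : IsNearTwo α ε K) (q : ℝ) :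
    2 * ∫⁻ x, ENNReal.ofReal (1 - exp (-(q * x)) - q * x * exp (-(q * x))) ∂μ =
      ∫⁻ p, ENNReal.ofReal (K p.1 p.2 * ((1 - exp (-(q * p.1))) * (1 - exp (-(q * p.2)))))
        ∂(μ.prod μ) := by
  have hmeas : AEMeasurable (fun p : ℝ × ℝ => ENNReal.ofReal (K p.1 p.2) * ENNReal.ofReal (p.1 *
      ((1 - exp (-(q * p.1))) / p.1 - (1 - exp (-(q * (p.1 + p.2)))) / (p.1 + p.2))))
      (μ.prod μ) :=
    (hK.aemeasurable_ofReal hμ.absolutelyContinuous).mul (by fun_prop)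
  have hnonneg : ∀ {y z : ℝ}, 0 < y → 0 < z →
      0 ≤ y * ((1 - exp (-(q * y))) / y - (1 - exp (-(q * (y + z)))) / (y + z)) := fun hy hz =>
    mul_nonneg hy.le (sub_nonneg.2
      (antitoneOn_one_sub_exp_neg_div q hy (add_pos hy hz) (le_add_of_nonneg_right hz.le)))
  rw [hμ.lintegral_laplaceWeight hK, two_mul_lintegral_prod_self hmeas]
  refine lintegral_congr_ae ?_
  filter_upwards [ae_prod_pos hμ.ae_pos] with p ⟨hy, hz⟩
  rw [Prod.fst_swap, Prod.snd_swap, hK.symm _ _ hy hz, ← mul_add,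
    ← ENNReal.ofReal_add (hnonneg hy hz) (hnonneg hz hy), laplaceWeight_symmetrised q hy hz,
    ENNReal.ofReal_mul (zero_le_two.trans (hK.two_le _ _ hy hz))]

end LaplaceIdentity

/-- The Bernstein function of a measure `μ` on `(0, ∞)`, that is, its total mass minus its Laplace
transform; this form also makes sense if `μ` is infinite near `0` but has a first moment. -/
noncomputable def bernsteinTransform (μ : Measure ℝ) (q : ℝ) : ℝ :=
  ∫ x, (1 - exp (-(q * x))) ∂μ

section BernsteinTransform

variable {μ : Measure ℝ}

theorem integrable_one_sub_exp_neg (hpos : ∀ᵐ x ∂μ, 0 < x) (hint : Integrable (fun x => x) μ)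
    {q : ℝ} (hq : 0 ≤ q) : Integrable (fun x => 1 - exp (-(q * x))) μ := by
  refine (hint.const_mul q).mono' (by fun_prop) ?_
  filter_upwards [hpos] with x hx
  rw [norm_of_nonneg (one_sub_exp_neg_nonneg (mul_nonneg hq hx.le))]
  exact one_sub_exp_neg_le_self _

theorem norm_mul_exp_neg_le {q x : ℝ} (hq : 0 ≤ q) (hx : 0 ≤ x) : ‖x * exp (-(q * x))‖ ≤ x := by
  rw [norm_of_nonneg (mul_nonneg hx (exp_pos _).le)]
  exact mul_le_of_le_one_right hx (exp_le_one_iff.2 (neg_nonpos.2 (mul_nonneg hq hx)))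

theorem integrable_mul_exp_neg (hpos : ∀ᵐ x ∂μ, 0 < x) (hint : Integrable (fun x => x) μ)
    {q : ℝ} (hq : 0 ≤ q) : Integrable (fun x => x * exp (-(q * x))) μ :=
  hint.mono' (by fun_prop) (hpos.mono fun _ hx => norm_mul_exp_neg_le hq hx.le)

theorem bernsteinTransform_nonneg (hpos : ∀ᵐ x ∂μ, 0 < x) {q : ℝ} (hq : 0 ≤ q) :
    0 ≤ bernsteinTransform μ q :=
  integral_nonneg_of_ae (hpos.mono fun _ hx => one_sub_exp_neg_nonneg (mul_nonneg hq hx.le))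

theorem ofReal_bernsteinTransform (hpos : ∀ᵐ x ∂μ, 0 < x) (hint : Integrable (fun x => x) μ)
    {q : ℝ} (hq : 0 ≤ q) :
    ENNReal.ofReal (bernsteinTransform μ q) = ∫⁻ x, ENNReal.ofReal (1 - exp (-(q * x))) ∂μ :=
  ofReal_integral_eq_lintegral_ofReal (integrable_one_sub_exp_neg hpos hint hq)
    (hpos.mono fun _ hx => one_sub_exp_neg_nonneg (mul_nonneg hq hx.le))

theorem hasDerivAt_one_sub_exp_neg_mul (q x : ℝ) :
    HasDerivAt (fun q => 1 - exp (-(q * x))) (x * exp (-(q * x))) q := by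
  simpa [mul_comm] using (((hasDerivAt_id q).mul_const x).neg.exp).const_sub 1

theorem hasDerivAt_bernsteinTransform (hpos : ∀ᵐ x ∂μ, 0 < x) (hint : Integrable (fun x => x) μ)
    {q : ℝ} (hq : 0 < q) :
    HasDerivAt (bernsteinTransform μ) (∫ x, x * exp (-(q * x)) ∂μ) q := by
  refine (hasDerivAt_integral_of_dominated_loc_of_deriv_le (bound := fun x => x)
    (F := fun q x => 1 - exp (-(q * x))) (F' := fun q x => x * exp (-(q * x)))
    (Ioi_mem_nhds hq) (.of_forall fun _ => by fun_prop)
    (integrable_one_sub_exp_neg hpos hint hq.le) (by fun_prop) ?_ hint ?_).2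
  · exact hpos.mono fun x hx r hr => norm_mul_exp_neg_le (le_of_lt hr) hx.le
  · exact .of_forall fun x r _ => hasDerivAt_one_sub_exp_neg_mul r x

theorem tendsto_bernsteinTransform_div (hpos : ∀ᵐ x ∂μ, 0 < x)
    (hint : Integrable (fun x => x) μ) :
    Tendsto (fun q => bernsteinTransform μ q / q) (𝓝[>] 0) (𝓝 (∫ x, x ∂μ)) := by
  simp only [bernsteinTransform, ← integral_div]
  refine tendsto_integral_filter_of_dominated_convergence (fun x => x)
    (.of_forall fun _ => by fun_prop) ?_ hint (.of_forall fun x => ?_)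
  · filter_upwards [self_mem_nhdsWithin] with q hq
    filter_upwards [hpos] with x hx
    rw [norm_of_nonneg (div_nonneg (one_sub_exp_neg_nonneg (mul_pos hq hx).le) (le_of_lt hq)),
      div_le_iff₀' hq]
    exact one_sub_exp_neg_le_self _
  · have h := (hasDerivAt_one_sub_exp_neg_mul 0 x).tendsto_slope_zero_right
    simpa [div_eq_inv_mul] using h

theorem measure_univ_le_of_bernsteinTransform_le (hpos : ∀ᵐ x ∂μ, 0 < x)
    (hint : Integrable (fun x => x) μ) {C : ℝ} (h : ∀ q, 0 < q → bernsteinTransform μ q ≤ C) :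
    μ univ ≤ ENNReal.ofReal C := by
  have hlim : ∀ᵐ x ∂μ, Tendsto (fun q : ℝ => ENNReal.ofReal (1 - exp (-(q * x)))) atTop (𝓝 1) := by
    filter_upwards [hpos] with x hx
    have hexp : Tendsto (fun q : ℝ => 1 - exp (-(q * x))) atTop (𝓝 (1 - 0)) :=
      (tendsto_exp_neg_atTop_nhds_zero.comp (tendsto_id.atTop_mul_const hx)).const_sub 1
    simpa using ENNReal.tendsto_ofReal hexp
  calc μ univ = ∫⁻ x, liminf (fun q : ℝ => ENNReal.ofReal (1 - exp (-(q * x)))) atTop ∂μ := by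
        rw [← lintegral_one]
        exact lintegral_congr_ae (hlim.mono fun x hx => hx.liminf_eq.symm)
    _ ≤ liminf (fun q : ℝ => ∫⁻ x, ENNReal.ofReal (1 - exp (-(q * x))) ∂μ) atTop :=
        lintegral_liminf_le fun q => by fun_prop
    _ ≤ ENNReal.ofReal C := by
        refine liminf_le_of_frequently_le' (Eventually.frequently ?_)
        filter_upwards [eventually_gt_atTop 0] with q hq
        rw [← ofReal_bernsteinTransform hpos hint hq.le]
        exact ENNReal.ofReal_le_ofReal (h q hq)

end BernsteinTransform

section Deviation

theorem one_sub_exp_neg_le_rpow {t s : ℝ} (ht : 0 ≤ t) (hs : s ∈ Icc (0 : ℝ) 1) :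
    1 - exp (-t) ≤ t ^ s := by
  rcases le_total t 1 with h | h
  · exact (one_sub_exp_neg_le_self t).trans (self_le_rpow_of_le_one ht h hs.2)
  · exact (sub_le_self _ (exp_pos _).le).trans (one_le_rpow h hs.1)

theorem rpow_one_sub_le {α z : ℝ} (hα : α ∈ Icc (0 : ℝ) 1) (hz : 0 ≤ z) :
    z ^ (1 - α) ≤ α + (1 - α) * z := by
  simpa using geom_mean_le_arith_mean2_weighted hα.1 (sub_nonneg.2 hα.2) zero_le_one hz
    (add_sub_cancel α 1)

theorem div_rpow_mul_one_sub_exp_neg_le {α q y z : ℝ} (hα : α ∈ Icc (0 : ℝ) 1) (hq : 0 < q)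
    (hy : 0 < y) (hz : 0 < z) :
    (y / z) ^ α * ((1 - exp (-(q * y))) * (1 - exp (-(q * z)))) ≤
      q ^ (2 - α) * (y * (α + (1 - α) * z)) := by
  have hqy : 1 - exp (-(q * y)) ≤ (q * y) ^ (1 - α) :=
    one_sub_exp_neg_le_rpow (by positivity) (Icc.one_sub_mem hα)
  have hqz : 1 - exp (-(q * z)) ≤ q * z := one_sub_exp_neg_le_self _
  calc (y / z) ^ α * ((1 - exp (-(q * y))) * (1 - exp (-(q * z))))
      ≤ (y / z) ^ α * ((q * y) ^ (1 - α) * (q * z)) := by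
        gcongr
        exact one_sub_exp_neg_nonneg (by positivity)
    _ = q ^ (2 - α) * (y * z ^ (1 - α)) := by
        have hq₂ : q ^ (2 - α) = q ^ (1 - α) * q := by
          rw [← rpow_add_one hq.ne']; ring_nf
        rw [div_rpow hy.le hz.le, mul_rpow hq.le hy.le, hq₂, rpow_sub hz, rpow_sub hy, rpow_one,
          rpow_one]
        field_simp
    _ ≤ q ^ (2 - α) * (y * (α + (1 - α) * z)) := by
        gcongr
        exact rpow_one_sub_le hα hz.le

variable {μ : Measure ℝ} {α ε : ℝ} {K : ℝ → ℝ → ℝ}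

theorem IsNearTwo.mul_one_sub_exp_neg_le (hK : IsNearTwo α ε K) (hα : α ∈ Icc (0 : ℝ) 1)
    {q y z : ℝ} (hq : 0 < q) (hy : 0 < y) (hz : 0 < z) :
    K y z * ((1 - exp (-(q * y))) * (1 - exp (-(q * z)))) ≤
      2 * ((1 - exp (-(q * y))) * (1 - exp (-(q * z)))) +
        ε * q ^ (2 - α) * (y * (α + (1 - α) * z) + z * (α + (1 - α) * y)) := by
  have hψψ : 0 ≤ (1 - exp (-(q * y))) * (1 - exp (-(q * z))) :=
    mul_nonneg (one_sub_exp_neg_nonneg (by positivity)) (one_sub_exp_neg_nonneg (by positivity))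
  have hyz := div_rpow_mul_one_sub_exp_neg_le hα hq hy hz
  have hzy := div_rpow_mul_one_sub_exp_neg_le hα hq hz hy
  rw [mul_comm (1 - exp (-(q * z)))] at hzy
  linarith [mul_le_mul_of_nonneg_right (hK.le y z hy hz) hψψ,
    mul_le_mul_of_nonneg_left (add_le_add hyz hzy) hK.nonneg_deviation]

theorem IsWeakProfile.integrable_id (hμ : IsWeakProfile K μ) : Integrable (fun x => x) μ :=
  (lintegral_ofReal_ne_top_iff_integrable (by fun_prop) (hμ.ae_pos.mono fun _ => le_of_lt)).1
    (hμ.lintegral_ofReal ▸ ENNReal.one_ne_top)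

theorem IsWeakProfile.integral_id (hμ : IsWeakProfile K μ) : ∫ x, x ∂μ = 1 := by
  rw [integral_eq_lintegral_of_nonneg_ae (hμ.ae_pos.mono fun _ => le_of_lt) (by fun_prop),
    hμ.lintegral_ofReal, ENNReal.toReal_one]

theorem IsWeakProfile.bernsteinTransform_sub_eq (hμ : IsWeakProfile K μ) {q : ℝ} (hq : 0 ≤ q) :
    bernsteinTransform μ q - q * ∫ x, x * exp (-(q * x)) ∂μ =
      ∫ x, (1 - exp (-(q * x)) - q * x * exp (-(q * x))) ∂μ := by
  simp only [mul_assoc]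
  rw [bernsteinTransform, ← integral_const_mul, integral_sub
    (integrable_one_sub_exp_neg hμ.ae_pos hμ.integrable_id hq)
    ((integrable_mul_exp_neg hμ.ae_pos hμ.integrable_id hq).const_mul q)]

theorem IsWeakProfile.integrable_prod_one_sub_exp_neg (hμ : IsWeakProfile K μ) {q : ℝ}
    (hq : 0 ≤ q) :
    Integrable (fun p : ℝ × ℝ => (1 - exp (-(q * p.1))) * (1 - exp (-(q * p.2)))) (μ.prod μ) :=
  have h := integrable_one_sub_exp_neg hμ.ae_pos hμ.integrable_id hq
  h.mul_prod h

variable [SFinite μ] {q : ℝ}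

theorem IsWeakProfile.ofReal_two_mul_bernsteinTransform_sub (hμ : IsWeakProfile K μ)
    (hK : IsNearTwo α ε K) (hq : 0 ≤ q) :
    ENNReal.ofReal (2 * (bernsteinTransform μ q - q * ∫ x, x * exp (-(q * x)) ∂μ)) =
      ∫⁻ p, ENNReal.ofReal (K p.1 p.2 * ((1 - exp (-(q * p.1))) * (1 - exp (-(q * p.2)))))
        ∂(μ.prod μ) := by
  have hψ := integrable_one_sub_exp_neg hμ.ae_pos hμ.integrable_id hq
  have hxψ := (integrable_mul_exp_neg hμ.ae_pos hμ.integrable_id hq).const_mul q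
  rw [← hμ.laplace_identity hK, hμ.bernsteinTransform_sub_eq hq, ENNReal.ofReal_mul zero_le_two,
    ENNReal.ofReal_ofNat, ofReal_integral_eq_lintegral_ofReal
      (by simpa only [mul_assoc, Pi.sub_def] using hψ.sub hxψ)
      (.of_forall fun x => sub_nonneg.2 (mul_exp_neg_le_one_sub_exp_neg (q * x)))]

theorem integral_prod_one_sub_exp_neg :
    ∫ p, (1 - exp (-(q * p.1))) * (1 - exp (-(q * p.2))) ∂(μ.prod μ) =
      bernsteinTransform μ q ^ 2 := by
  rw [integral_prod_mul (fun y => 1 - exp (-(q * y))) fun z => 1 - exp (-(q * z)),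
    bernsteinTransform, sq]

theorem IsWeakProfile.bernsteinTransform_sq_le (hμ : IsWeakProfile K μ) (hK : IsNearTwo α ε K)
    (hq : 0 ≤ q) :
    bernsteinTransform μ q ^ 2 ≤ bernsteinTransform μ q - q * ∫ x, x * exp (-(q * x)) ∂μ := by
  have hprod : ∀ᵐ p : ℝ × ℝ ∂(μ.prod μ), 0 ≤ (1 - exp (-(q * p.1))) * (1 - exp (-(q * p.2))) :=
    (ae_prod_pos hμ.ae_pos).mono fun p hp =>
      mul_nonneg (one_sub_exp_neg_nonneg (mul_nonneg hq hp.1.le))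
        (one_sub_exp_neg_nonneg (mul_nonneg hq hp.2.le))
  have hle : ENNReal.ofReal (2 * bernsteinTransform μ q ^ 2) ≤
      ENNReal.ofReal (2 * (bernsteinTransform μ q - q * ∫ x, x * exp (-(q * x)) ∂μ)) := by
    rw [hμ.ofReal_two_mul_bernsteinTransform_sub hK hq, ← integral_prod_one_sub_exp_neg,
      ← integral_const_mul, ofReal_integral_eq_lintegral_ofReal
        ((hμ.integrable_prod_one_sub_exp_neg hq).const_mul 2)
        (hprod.mono fun p hp => mul_nonneg zero_le_two hp)]
    refine lintegral_mono_ae ?_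
    filter_upwards [hprod, ae_prod_pos hμ.ae_pos] with p hp ⟨hy, hz⟩
    exact ENNReal.ofReal_le_ofReal (mul_le_mul_of_nonneg_right (hK.two_le _ _ hy hz) hp)
  have hdefect : 0 ≤ bernsteinTransform μ q - q * ∫ x, x * exp (-(q * x)) ∂μ := by
    rw [hμ.bernsteinTransform_sub_eq hq]
    exact integral_nonneg fun x => sub_nonneg.2 (mul_exp_neg_le_one_sub_exp_neg (q * x))
  linarith [(ENNReal.ofReal_le_ofReal_iff (mul_nonneg zero_le_two hdefect)).1 hle]

theorem IsWeakProfile.bernsteinTransform_le_one (hμ : IsWeakProfile K μ) (hK : IsNearTwo α ε K)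
    (hq : 0 ≤ q) : bernsteinTransform μ q ≤ 1 := by
  have hderiv : 0 ≤ q * ∫ x, x * exp (-(q * x)) ∂μ :=
    mul_nonneg hq (integral_nonneg_of_ae
      (hμ.ae_pos.mono fun x hx => mul_nonneg hx.le (exp_pos _).le))
  nlinarith [hμ.bernsteinTransform_sq_le hK hq]

theorem IsWeakProfile.measure_univ_le_one (hμ : IsWeakProfile K μ) (hK : IsNearTwo α ε K) :
    μ univ ≤ 1 := by
  simpa using measure_univ_le_of_bernsteinTransform_le hμ.ae_pos hμ.integrable_id
    fun q hq => hμ.bernsteinTransform_le_one hK hq.le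

theorem IsWeakProfile.measureReal_univ_le_one (hμ : IsWeakProfile K μ) (hK : IsNearTwo α ε K) :
    μ.real univ ≤ 1 :=
  ENNReal.toReal_le_of_le_ofReal zero_le_one (by simpa using hμ.measure_univ_le_one hK)

theorem IsWeakProfile.isFiniteMeasure (hμ : IsWeakProfile K μ) (hK : IsNearTwo α ε K) :
    IsFiniteMeasure μ :=
  ⟨(hμ.measure_univ_le_one hK).trans_lt ENNReal.one_lt_top⟩

theorem IsWeakProfile.integrable_linear_majorant (hμ : IsWeakProfile K μ)
    (hK : IsNearTwo α ε K) :
    Integrable (fun p : ℝ × ℝ => p.1 * (α + (1 - α) * p.2)) (μ.prod μ) :=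
  have := hμ.isFiniteMeasure hK
  hμ.integrable_id.mul_prod ((integrable_const α).add (hμ.integrable_id.const_mul (1 - α)))

theorem IsWeakProfile.integral_linear_majorant_le (hμ : IsWeakProfile K μ)
    (hK : IsNearTwo α ε K) (hα : 0 ≤ α) :
    ∫ p, p.1 * (α + (1 - α) * p.2) ∂(μ.prod μ) ≤ 1 := by
  have := hμ.isFiniteMeasure hK
  have hfactor : ∫ z, (α + (1 - α) * z) ∂μ = α * μ.real univ + (1 - α) := by
    rw [integral_add (integrable_const α) (hμ.integrable_id.const_mul _), integral_const_mul,
      hμ.integral_id, integral_const, smul_eq_mul, mul_one, mul_comm]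
  rw [integral_prod_mul (fun y : ℝ => y) fun z => α + (1 - α) * z, hμ.integral_id, one_mul,
    hfactor]
  linarith [mul_le_of_le_one_right hα (hμ.measureReal_univ_le_one hK)]

theorem IsWeakProfile.integrable_kernel_majorant (hμ : IsWeakProfile K μ) (hK : IsNearTwo α ε K)
    (hq : 0 ≤ q) (c : ℝ) :
    Integrable (fun p : ℝ × ℝ => 2 * ((1 - exp (-(q * p.1))) * (1 - exp (-(q * p.2)))) +
      c * (p.1 * (α + (1 - α) * p.2) + p.2 * (α + (1 - α) * p.1))) (μ.prod μ) :=
  have hM := hμ.integrable_linear_majorant hK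
  ((hμ.integrable_prod_one_sub_exp_neg hq).const_mul 2).add ((hM.add hM.swap).const_mul c)

theorem IsWeakProfile.integral_kernel_majorant_le (hμ : IsWeakProfile K μ)
    (hK : IsNearTwo α ε K) (hα : 0 ≤ α) (hq : 0 ≤ q) {c : ℝ} (hc : 0 ≤ c) :
    ∫ p, 2 * ((1 - exp (-(q * p.1))) * (1 - exp (-(q * p.2)))) +
      c * (p.1 * (α + (1 - α) * p.2) + p.2 * (α + (1 - α) * p.1)) ∂(μ.prod μ) ≤
        2 * (bernsteinTransform μ q ^ 2 + c) := by
  have hM := hμ.integrable_linear_majorant hK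
  have hMswap : Integrable (fun p : ℝ × ℝ => p.2 * (α + (1 - α) * p.1)) (μ.prod μ) := hM.swap
  have hsum : Integrable (fun p : ℝ × ℝ =>
      c * (p.1 * (α + (1 - α) * p.2) + p.2 * (α + (1 - α) * p.1))) (μ.prod μ) :=
    (hM.add hMswap).const_mul c
  have hswap : ∫ p, p.2 * (α + (1 - α) * p.1) ∂(μ.prod μ) ≤ 1 :=
    (integral_prod_swap fun p : ℝ × ℝ => p.1 * (α + (1 - α) * p.2)).trans_le
      (hμ.integral_linear_majorant_le hK hα)
  rw [integral_add ((hμ.integrable_prod_one_sub_exp_neg hq).const_mul 2) hsum,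
    integral_const_mul, integral_const_mul,
    integral_add hM hMswap, integral_prod_one_sub_exp_neg]
  linarith [mul_le_mul_of_nonneg_left
    (add_le_add (hμ.integral_linear_majorant_le hK hα) hswap) hc]

theorem IsWeakProfile.le_bernsteinTransform_sq_add (hμ : IsWeakProfile K μ)
    (hK : IsNearTwo α ε K) (hα : α ∈ Icc (0 : ℝ) 1) (hq : 0 < q) :
    bernsteinTransform μ q - q * ∫ x, x * exp (-(q * x)) ∂μ ≤
      bernsteinTransform μ q ^ 2 + ε * q ^ (2 - α) := by
  have hc : 0 ≤ ε * q ^ (2 - α) := mul_nonneg hK.nonneg_deviation (rpow_nonneg hq.le _)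
  suffices ENNReal.ofReal (2 * (bernsteinTransform μ q - q * ∫ x, x * exp (-(q * x)) ∂μ)) ≤
      ENNReal.ofReal (2 * (bernsteinTransform μ q ^ 2 + ε * q ^ (2 - α))) by
    linarith [(ENNReal.ofReal_le_ofReal_iff
      (mul_nonneg zero_le_two (add_nonneg (sq_nonneg _) hc))).1 this]
  have hpointwise := (ae_prod_pos hμ.ae_pos).mono fun p hp =>
    hK.mul_one_sub_exp_neg_le hα hq hp.1 hp.2
  have hnonneg : ∀ᵐ p : ℝ × ℝ ∂(μ.prod μ),
      0 ≤ K p.1 p.2 * ((1 - exp (-(q * p.1))) * (1 - exp (-(q * p.2)))) :=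
    (ae_prod_pos hμ.ae_pos).mono fun p hp =>
      mul_nonneg (zero_le_two.trans (hK.two_le _ _ hp.1 hp.2))
        (mul_nonneg (one_sub_exp_neg_nonneg (mul_pos hq hp.1).le)
          (one_sub_exp_neg_nonneg (mul_pos hq hp.2).le))
  rw [hμ.ofReal_two_mul_bernsteinTransform_sub hK hq.le]
  refine (lintegral_mono_ae (hpointwise.mono fun p => ENNReal.ofReal_le_ofReal)).trans ?_
  rw [← ofReal_integral_eq_lintegral_ofReal (hμ.integrable_kernel_majorant hK hq.le _)
    (by filter_upwards [hnonneg, hpointwise] with p h₁ h₂ using h₁.trans h₂)]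
  exact ENNReal.ofReal_le_ofReal (hμ.integral_kernel_majorant_le hK hα.1 hq.le hc)

end Deviation

section Riccati

theorem hasDerivAt_one_div_one_add {q : ℝ} (hq : 0 < q) :
    HasDerivAt (fun q : ℝ => 1 / (1 + q)) (-(1 / (1 + q)) ^ 2) q := by
  simpa [neg_div] using
    ((hasDerivAt_id' q).const_add 1).fun_inv (show 1 + q ≠ 0 by positivity)

theorem hasDerivAt_rpow_one_sub_div {α q : ℝ} (hα : α < 1) (hq : 0 < q) :
    HasDerivAt (fun q : ℝ => q ^ (1 - α) / (1 - α)) (q ^ (-α)) q := by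
  have h := (hasDerivAt_rpow_const (p := 1 - α) (.inl hq.ne')).div_const (1 - α)
  rwa [mul_div_cancel_left₀ _ (sub_pos.2 hα).ne', sub_sub_cancel_left] at h

theorem tendsto_rpow_one_sub_div_zero {α : ℝ} (hα : α < 1) :
    Tendsto (fun q : ℝ => q ^ (1 - α) / (1 - α)) (𝓝[>] 0) (𝓝 0) := by
  have h := (continuousAt_rpow_const 0 (1 - α) (.inr (sub_pos.2 hα).le)).div_const (1 - α)
  simpa [zero_rpow (sub_pos.2 hα).ne'] using h.tendsto.mono_left nhdsWithin_le_nhds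

variable {α c : ℝ} {u ρ : ℝ → ℝ}

/- With `v q = 1 / (1 + q)`, which solves `v' = -v ^ 2`, the equation for `u` gives
`((v - u) ^ 2)' = -2 * (v - u) ^ 2 * (v + u) + 2 * (v - u) * ρ ≤ 2 * ρ`. -/
theorem antitoneOn_sq_one_div_one_add_sub_of_riccati (hα : α < 1)
    (hu : ∀ q, 0 < q → HasDerivAt u (-u q ^ 2 - ρ q) q) (hu_nonneg : ∀ q, 0 < q → 0 ≤ u q)
    (hρ : ∀ q, 0 < q → ρ q ∈ Icc 0 (c * q ^ (-α))) :
    AntitoneOn (fun q => (1 / (1 + q) - u q) ^ 2 - 2 * c * (q ^ (1 - α) / (1 - α))) (Ioi 0) := by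
  have hderiv : ∀ q, 0 < q → HasDerivAt
      (fun q => (1 / (1 + q) - u q) ^ 2 - 2 * c * (q ^ (1 - α) / (1 - α)))
      (2 * (1 / (1 + q) - u q) * (-(1 / (1 + q)) ^ 2 - (-u q ^ 2 - ρ q)) -
        2 * c * q ^ (-α)) q := fun q hq => by
    simpa using (((hasDerivAt_one_div_one_add hq).fun_sub (hu q hq)).fun_pow 2).fun_sub
      ((hasDerivAt_rpow_one_sub_div hα hq).const_mul (2 * c))
  refine antitoneOn_of_hasDerivWithinAt_nonpos (convex_Ioi 0)
    (fun q hq => (hderiv q hq).continuousAt.continuousWithinAt)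
    (fun q hq => (hderiv q (interior_subset hq)).hasDerivWithinAt) fun q hq => ?_
  replace hq : 0 < q := interior_subset hq
  have hu₀ := hu_nonneg q hq
  obtain ⟨hρ₀, hρ₁⟩ := hρ q hq
  have hv₁ : 1 / (1 + q) ≤ 1 := (div_le_one₀ (by positivity)).2 (le_add_of_nonneg_right hq.le)
  have hdamping : 0 ≤ (1 / (1 + q) - u q) ^ 2 * (1 / (1 + q) + u q) := by positivity
  have hforcing : (1 / (1 + q) - u q) * ρ q ≤ 1 * ρ q := by gcongr; linarith
  linarith

theorem sq_one_div_one_add_sub_le_of_riccati (hα : α < 1)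
    (hu : ∀ q, 0 < q → HasDerivAt u (-u q ^ 2 - ρ q) q) (hu_nonneg : ∀ q, 0 < q → 0 ≤ u q)
    (hρ : ∀ q, 0 < q → ρ q ∈ Icc 0 (c * q ^ (-α))) (hu_zero : Tendsto u (𝓝[>] 0) (𝓝 1))
    {q : ℝ} (hq : 0 < q) :
    (1 / (1 + q) - u q) ^ 2 ≤ 2 * c * (q ^ (1 - α) / (1 - α)) := by
  have hv : Tendsto (fun q : ℝ => 1 / (1 + q)) (𝓝[>] 0) (𝓝 (1 / (1 + 0))) :=
    ContinuousAt.tendsto (f := fun q : ℝ => 1 / (1 + q)) (by fun_prop (disch := norm_num))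
      |>.mono_left nhdsWithin_le_nhds
  have hlim : Tendsto (fun q => (1 / (1 + q) - u q) ^ 2 - 2 * c * (q ^ (1 - α) / (1 - α)))
      (𝓝[>] 0) (𝓝 0) := by
    simpa using ((hv.sub hu_zero).pow 2).sub ((tendsto_rpow_one_sub_div_zero hα).const_mul (2 * c))
  refine sub_nonpos.1 (ge_of_tendsto hlim ?_)
  filter_upwards [Ioo_mem_nhdsGT hq] with r hr using
    antitoneOn_sq_one_div_one_add_sub_of_riccati hα hu hu_nonneg hρ hr.1 hq hr.2.le

end Riccati

section BernsteinLimit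

variable {μ : Measure ℝ} {α ε : ℝ} {K : ℝ → ℝ → ℝ} {q : ℝ}

theorem IsWeakProfile.hasDerivAt_bernsteinTransform_div (hμ : IsWeakProfile K μ) (hq : 0 < q) :
    HasDerivAt (fun q => bernsteinTransform μ q / q)
      (-(bernsteinTransform μ q - q * ∫ x, x * exp (-(q * x)) ∂μ) / q ^ 2) q := by
  refine ((hasDerivAt_bernsteinTransform hμ.ae_pos hμ.integrable_id hq).fun_div
    (hasDerivAt_id' q) hq.ne').congr_deriv ?_
  ring

theorem IsWeakProfile.sq_one_div_one_add_sub_bernsteinTransform_div_le [SFinite μ]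
    (hμ : IsWeakProfile K μ) (hK : IsNearTwo α ε K) (hα : α ∈ Ico (0 : ℝ) 1) (hq : 0 < q) :
    (1 / (1 + q) - bernsteinTransform μ q / q) ^ 2 ≤ 2 * ε * (q ^ (1 - α) / (1 - α)) := by
  set N : ℝ → ℝ := fun q => bernsteinTransform μ q - q * ∫ x, x * exp (-(q * x)) ∂μ
  refine sq_one_div_one_add_sub_le_of_riccati hα.2
    (ρ := fun q => (N q - bernsteinTransform μ q ^ 2) / q ^ 2) (fun q hq => ?_)
    (fun q hq => div_nonneg (bernsteinTransform_nonneg hμ.ae_pos hq.le) hq.le)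
    (fun q hq => ⟨?_, ?_⟩) ?_ hq
  · refine (hμ.hasDerivAt_bernsteinTransform_div hq).congr_deriv ?_
    ring
  · exact div_nonneg (sub_nonneg.2 (hμ.bernsteinTransform_sq_le hK hq.le)) (sq_nonneg q)
  · rw [div_le_iff₀ (pow_pos hq 2), mul_assoc, ← rpow_two q, ← rpow_add hq, neg_add_eq_sub]
    exact sub_le_iff_le_add'.2 (hμ.le_bernsteinTransform_sq_add hK ⟨hα.1, hα.2.le⟩ hq)
  · exact hμ.integral_id ▸ tendsto_bernsteinTransform_div hμ.ae_pos hμ.integrable_id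

theorem tendsto_bernsteinTransform {ι : Type*} {l : Filter ι} {α : ℝ} (hα : α ∈ Ico (0 : ℝ) 1)
    {ε : ι → ℝ} (hε : Tendsto ε l (𝓝 0)) {K : ι → ℝ → ℝ → ℝ}
    (hK : ∀ i, IsNearTwo α (ε i) (K i)) {μ : ι → Measure ℝ} [∀ i, SFinite (μ i)]
    (hμ : ∀ i, IsWeakProfile (K i) (μ i)) {q : ℝ} (hq : 0 < q) :
    Tendsto (fun i => bernsteinTransform (μ i) q) l (𝓝 (q / (1 + q))) := by
  have hbound : Tendsto (fun i => 2 * ε i * (q ^ (1 - α) / (1 - α))) l (𝓝 0) := by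
    simpa using (hε.const_mul 2).mul_const (q ^ (1 - α) / (1 - α))
  have hsq := squeeze_zero (fun i => sq_nonneg _) (fun i =>
    (hμ i).sq_one_div_one_add_sub_bernsteinTransform_div_le (hK i) hα hq) hbound
  have hdiff : Tendsto (fun i => 1 / (1 + q) - bernsteinTransform (μ i) q / q) l (𝓝 0) := by
    simpa [tendsto_zero_iff_abs_tendsto_zero, Function.comp_def, sqrt_sq_eq_abs] using hsq.sqrt
  have h := (hdiff.const_sub (1 / (1 + q))).mul_const q
  simpa [hq.ne', div_eq_mul_inv, mul_comm q] using h

end BernsteinLimit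

section WeakConvergence

variable {ι : Type*} {l : Filter ι} {a b : ℝ}

theorem integrable_of_ae_mem_Icc {ν : Measure ℝ} [IsFiniteMeasure ν]
    (hν : ∀ᵐ t ∂ν, t ∈ Icc a b) {f : ℝ → ℝ} (hf : Continuous f) : Integrable f ν := by
  have h := hf.continuousOn.integrableOn_compact (μ := ν) (isCompact_Icc (a := a) (b := b))
  rwa [IntegrableOn, Measure.restrict_eq_self_of_ae_mem hν] at h

theorem tendsto_integral_polynomial_of_tendsto_moments {ν : ι → Measure ℝ} {ν₀ : Measure ℝ}
    [∀ i, IsFiniteMeasure (ν i)] [IsFiniteMeasure ν₀] (hν : ∀ i, ∀ᵐ t ∂(ν i), t ∈ Icc a b)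
    (hν₀ : ∀ᵐ t ∂ν₀, t ∈ Icc a b)
    (hmom : ∀ n : ℕ, Tendsto (fun i => ∫ t, t ^ n ∂(ν i)) l (𝓝 (∫ t, t ^ n ∂ν₀)))
    (p : Polynomial ℝ) :
    Tendsto (fun i => ∫ t, p.eval t ∂(ν i)) l (𝓝 (∫ t, p.eval t ∂ν₀)) := by
  have hexpand : ∀ (ν' : Measure ℝ) [IsFiniteMeasure ν'], (∀ᵐ t ∂ν', t ∈ Icc a b) →
      ∫ t, p.eval t ∂ν' = ∑ n ∈ Finset.range (p.natDegree + 1), p.coeff n * ∫ t, t ^ n ∂ν' := by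
    intro ν' _ hν'
    simp only [p.eval_eq_sum_range]
    rw [integral_finsetSum _ fun n _ =>
      (integrable_of_ae_mem_Icc hν' (continuous_pow n)).const_mul (p.coeff n)]
    simp only [integral_const_mul]
  rw [hexpand ν₀ hν₀]
  simp only [fun i => hexpand (ν i) (hν i)]
  exact tendsto_finsetSum _ fun n _ => (hmom n).const_mul (p.coeff n)

theorem abs_integral_sub_le_of_ae_mem_Icc {ν : Measure ℝ} [IsFiniteMeasure ν]
    (hν : ∀ᵐ t ∂ν, t ∈ Icc a b) {f g : ℝ → ℝ} (hf : Continuous f) (hg : Continuous g) {δ : ℝ}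
    (h : ∀ t ∈ Icc a b, |f t - g t| ≤ δ) :
    |∫ t, f t ∂ν - ∫ t, g t ∂ν| ≤ δ * ν.real univ := by
  rw [← integral_sub (integrable_of_ae_mem_Icc hν hf) (integrable_of_ae_mem_Icc hν hg)]
  exact norm_integral_le_of_norm_le_const (f := fun t => f t - g t) (hν.mono h)

theorem tendsto_integral_of_tendsto_moments {ν : ι → Measure ℝ} {ν₀ : Measure ℝ}
    [∀ i, IsFiniteMeasure (ν i)] [IsFiniteMeasure ν₀] (hν : ∀ i, ∀ᵐ t ∂(ν i), t ∈ Icc a b)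
    (hν₀ : ∀ᵐ t ∂ν₀, t ∈ Icc a b)
    (hmom : ∀ n : ℕ, Tendsto (fun i => ∫ t, t ^ n ∂(ν i)) l (𝓝 (∫ t, t ^ n ∂ν₀)))
    {f : ℝ → ℝ} (hf : Continuous f) :
    Tendsto (fun i => ∫ t, f t ∂(ν i)) l (𝓝 (∫ t, f t ∂ν₀)) := by
  have hmass : Tendsto (fun i => (ν i).real univ) l (𝓝 (ν₀.real univ)) := by simpa using hmom 0
  set C : ℝ := ν₀.real univ + 1
  have hC : 0 < C := by positivity
  rw [Metric.tendsto_nhds]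
  intro δ hδ
  obtain ⟨p, hp⟩ := exists_polynomial_near_of_continuousOn a b f hf.continuousOn
    (δ / (3 * C)) (by positivity)
  have hclose : ∀ (ν' : Measure ℝ) [IsFiniteMeasure ν'], (∀ᵐ t ∂ν', t ∈ Icc a b) →
      ν'.real univ ≤ C → |∫ t, p.eval t ∂ν' - ∫ t, f t ∂ν'| ≤ δ / 3 := fun ν' _ hν' hle =>
    calc |∫ t, p.eval t ∂ν' - ∫ t, f t ∂ν'| ≤ δ / (3 * C) * ν'.real univ :=
          abs_integral_sub_le_of_ae_mem_Icc hν' p.continuous hf fun t ht => (hp t ht).le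
      _ ≤ δ / (3 * C) * C := by gcongr
      _ = δ / 3 := by field_simp
  filter_upwards [hmass.eventually_le_const (lt_add_one _), Metric.tendsto_nhds.1
    (tendsto_integral_polynomial_of_tendsto_moments hν hν₀ hmom p) (δ / 3) (by positivity)]
    with i hi hpi
  have h₁ := hclose (ν i) (hν i) hi
  have h₂ := hclose ν₀ hν₀ (lt_add_one _).le
  rw [dist_eq] at hpi ⊢
  rw [abs_le] at h₁ h₂
  rw [abs_lt] at hpi ⊢
  constructor <;> linarith

theorem tendsto_finiteMeasure_of_tendsto_moments {ν : ι → FiniteMeasure ℝ} {ν₀ : FiniteMeasure ℝ}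
    (hν : ∀ i, ∀ᵐ t ∂(ν i : Measure ℝ), t ∈ Icc a b) (hν₀ : ∀ᵐ t ∂(ν₀ : Measure ℝ), t ∈ Icc a b)
    (hmom : ∀ n : ℕ, Tendsto (fun i => ∫ t, t ^ n ∂(ν i : Measure ℝ)) l
      (𝓝 (∫ t, t ^ n ∂(ν₀ : Measure ℝ)))) :
    Tendsto ν l (𝓝 ν₀) :=
  FiniteMeasure.tendsto_of_forall_integral_tendsto fun f =>
    tendsto_integral_of_tendsto_moments hν hν₀ hmom f.continuous

theorem tendsto_finiteMeasure_apply_of_null_frontier {Ω : Type*} [Nonempty Ω]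
    [MeasurableSpace Ω] [TopologicalSpace Ω] [OpensMeasurableSpace Ω] [HasOuterApproxClosed Ω]
    {ν : ι → FiniteMeasure Ω} {ν₀ : FiniteMeasure Ω} (hlim : Tendsto ν l (𝓝 ν₀)) {s : Set Ω}
    (hs : ν₀ (frontier s) = 0) : Tendsto (fun i => ν i s) l (𝓝 (ν₀ s)) := by
  rcases eq_or_ne ν₀ 0 with rfl | hν₀
  · refine tendsto_of_tendsto_of_tendsto_of_le_of_le tendsto_const_nhds ?_ (fun i => zero_le)
      fun i => (ν i).apply_le_mass s
    simpa using hlim.mass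
  · have hfrontier : ν₀.normalize (frontier s) = 0 := by
      rw [ν₀.normalize_eq_of_nonzero hν₀, hs, mul_zero]
    simp only [FiniteMeasure.self_eq_mass_mul_normalize]
    exact hlim.mass.mul (ProbabilityMeasure.tendsto_measure_of_null_frontier_of_tendsto
      (FiniteMeasure.tendsto_normalize_of_tendsto hlim hν₀) hfrontier)

end WeakConvergence

section ExponentialLimit

variable {ι : Type*} {l : Filter ι} {μ : ι → Measure ℝ}

theorem integral_exp_neg_mul_eq_sub_bernsteinTransform {μ : Measure ℝ} [IsFiniteMeasure μ]
    (hpos : ∀ᵐ x ∂μ, 0 < x) (hint : Integrable (fun x => x) μ) {q : ℝ} (hq : 0 ≤ q) :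
    ∫ x, exp (-(q * x)) ∂μ = μ.real univ - bernsteinTransform μ q := by
  have h := integral_sub (integrable_const (1 : ℝ)) (integrable_one_sub_exp_neg hpos hint hq)
  simpa [bernsteinTransform] using h

theorem bernsteinTransform_le_measureReal_univ {μ : Measure ℝ} [IsFiniteMeasure μ]
    (hpos : ∀ᵐ x ∂μ, 0 < x) (hint : Integrable (fun x => x) μ) {q : ℝ} (hq : 0 ≤ q) :
    bernsteinTransform μ q ≤ μ.real univ := by
  rw [← sub_nonneg, ← integral_exp_neg_mul_eq_sub_bernsteinTransform hpos hint hq]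
  exact integral_nonneg fun x => (exp_pos _).le

theorem tendsto_div_one_add_atTop : Tendsto (fun q : ℝ => q / (1 + q)) atTop (𝓝 1) := by
  have h : Tendsto (fun q : ℝ => 1 - (1 + q)⁻¹) atTop (𝓝 (1 - 0)) :=
    (tendsto_inv_atTop_zero.comp (tendsto_atTop_add_const_left _ 1 tendsto_id)).const_sub 1
  rw [sub_zero] at h
  refine h.congr' ?_
  filter_upwards [eventually_gt_atTop 0] with q hq
  field_simp
  ring

theorem tendsto_measureReal_univ_of_tendsto_bernsteinTransform [∀ i, IsFiniteMeasure (μ i)]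
    (hpos : ∀ i, ∀ᵐ x ∂(μ i), 0 < x) (hint : ∀ i, Integrable (fun x => x) (μ i))
    (hmass : ∀ i, (μ i).real univ ≤ 1)
    (hlim : ∀ q, 0 < q → Tendsto (fun i => bernsteinTransform (μ i) q) l (𝓝 (q / (1 + q)))) :
    Tendsto (fun i => (μ i).real univ) l (𝓝 1) := by
  refine tendsto_order.2 ⟨fun c hc => ?_, fun c hc => .of_forall fun i => (hmass i).trans_lt hc⟩
  obtain ⟨q, hqc, hq⟩ := ((tendsto_div_one_add_atTop.eventually_const_lt hc).and
    (eventually_gt_atTop 0)).exists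
  filter_upwards [(hlim q hq).eventually_const_lt hqc] with i hi using
    hi.trans_le (bernsteinTransform_le_measureReal_univ (hpos i) (hint i) hq.le)

theorem tendsto_integral_exp_neg_pow [∀ i, IsFiniteMeasure (μ i)]
    (hpos : ∀ i, ∀ᵐ x ∂(μ i), 0 < x) (hint : ∀ i, Integrable (fun x => x) (μ i))
    (hmass : ∀ i, (μ i).real univ ≤ 1)
    (hlim : ∀ q, 0 < q → Tendsto (fun i => bernsteinTransform (μ i) q) l (𝓝 (q / (1 + q))))
    (n : ℕ) : Tendsto (fun i => ∫ x, exp (-x) ^ n ∂(μ i)) l (𝓝 (∫ t in Icc (0 : ℝ) 1, t ^ n)) := by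
  have hmoment : ∫ t in Icc (0 : ℝ) 1, t ^ n = 1 - n / (1 + n) := by
    rw [integral_Icc_eq_integral_Ioc, ← intervalIntegral.integral_of_le zero_le_one, integral_pow]
    field_simp
    simp [add_comm]
  have hbernstein : Tendsto (fun i => bernsteinTransform (μ i) n) l (𝓝 (n / (1 + n))) := by
    rcases n.eq_zero_or_pos with rfl | hn
    · simpa [bernsteinTransform] using tendsto_const_nhds
    · exact hlim n (Nat.cast_pos.2 hn)
  have hexp : ∀ i, ∫ x, exp (-x) ^ n ∂(μ i) = (μ i).real univ - bernsteinTransform (μ i) n := by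
    intro i
    rw [← integral_exp_neg_mul_eq_sub_bernsteinTransform (hpos i) (hint i) n.cast_nonneg]
    simp only [← exp_nat_mul, mul_neg]
  simp only [hmoment, hexp]
  exact (tendsto_measureReal_univ_of_tendsto_bernsteinTransform hpos hint hmass hlim).sub hbernstein

theorem volume_restrict_Icc_real_Iio {a b c : ℝ} (hc : c ∈ Icc a b) :
    (volume.restrict (Icc a b)).real (Iio c) = c - a := by
  have hinter : Iio c ∩ Icc a b = Ico a c := by
    ext t
    exact ⟨fun h => ⟨h.2.1, h.1⟩, fun h => ⟨h.2, h.1, h.2.le.trans hc.2⟩⟩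
  rw [measureReal_restrict_apply measurableSet_Iio, hinter, Real.volume_real_Ico_of_le hc.1]

/- The substitution `t = exp (-x)` turns the exponential law into the uniform law on `[0, 1]`, whose
moments determine it by Weierstrass' theorem. -/
theorem tendsto_measureReal_Ioi_of_tendsto_bernsteinTransform [∀ i, IsFiniteMeasure (μ i)]
    (hpos : ∀ i, ∀ᵐ x ∂(μ i), 0 < x) (hint : ∀ i, Integrable (fun x => x) (μ i))
    (hmass : ∀ i, (μ i).real univ ≤ 1)
    (hlim : ∀ q, 0 < q → Tendsto (fun i => bernsteinTransform (μ i) q) l (𝓝 (q / (1 + q))))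
    {R : ℝ} (hR : 0 ≤ R) : Tendsto (fun i => (μ i).real (Ioi R)) l (𝓝 (exp (-R))) := by
  have hexp : Measurable fun x : ℝ => exp (-x) := by fun_prop
  set ν : ι → FiniteMeasure ℝ := fun i => FiniteMeasure.map ⟨μ i, inferInstance⟩ fun x => exp (-x)
  set ν₀ : FiniteMeasure ℝ := ⟨volume.restrict (Icc 0 1), inferInstance⟩
  have hν : Tendsto ν l (𝓝 ν₀) := by
    refine tendsto_finiteMeasure_of_tendsto_moments (a := 0) (b := 1) (fun i => ?_)
      (ae_restrict_mem measurableSet_Icc) fun n => ?_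
    · refine (ae_map_iff hexp.aemeasurable measurableSet_Icc).2 ((hpos i).mono fun x hx => ?_)
      exact ⟨(exp_pos _).le, exp_le_one_iff.2 (neg_nonpos.2 hx.le)⟩
    · refine (tendsto_integral_exp_neg_pow hpos hint hmass hlim n).congr fun i => ?_
      exact (integral_map (f := fun t => t ^ n) hexp.aemeasurable
        (continuous_pow n).aestronglyMeasurable).symm
  have hfrontier : ν₀ (frontier (Iio (exp (-R)))) = 0 := by
    rw [frontier_Iio, FiniteMeasure.null_iff_toMeasure_null]
    exact measure_singleton (μ := volume.restrict (Icc (0 : ℝ) 1)) _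
  have hpreimage : (fun x => exp (-x)) ⁻¹' Iio (exp (-R)) = Ioi R := by
    ext x
    simp
  have hν_apply : ∀ i, ((ν i (Iio (exp (-R))) : NNReal) : ℝ) = (μ i).real (Ioi R) := fun i =>
    (map_measureReal_apply hexp measurableSet_Iio).trans (congrArg _ hpreimage)
  have hν₀_apply : ((ν₀ (Iio (exp (-R))) : NNReal) : ℝ) = exp (-R) :=
    (volume_restrict_Icc_real_Iio ⟨(exp_pos _).le, exp_le_one_iff.2 (neg_nonpos.2 hR)⟩).trans
      (sub_zero _)
  have h := NNReal.tendsto_coe.2 (tendsto_finiteMeasure_apply_of_null_frontier hν hfrontier)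
  simpa only [hν_apply, hν₀_apply] using h

end ExponentialLimit

/- Pólya's argument: on a short interval a monotone function is squeezed between its values at the
two ends, so finitely many points control it on `[a, b]`. -/
theorem tendstoUniformlyOn_Icc_of_antitoneOn {ι : Type*} {l : Filter ι} {a b : ℝ}
    {F : ι → ℝ → ℝ} {f : ℝ → ℝ} (hF : ∀ i, AntitoneOn (F i) (Icc a b))
    (hf : ContinuousOn f (Icc a b)) (hlim : ∀ x ∈ Icc a b, Tendsto (fun i => F i x) l (𝓝 (f x))) :
    TendstoUniformlyOn F f l (Icc a b) := by
  rw [← tendstoLocallyUniformlyOn_iff_tendstoUniformlyOn_of_compact isCompact_Icc,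
    Metric.tendstoLocallyUniformlyOn_iff]
  intro δ hδ x hx
  obtain ⟨r, hr, hfr⟩ := Metric.continuousOn_iff.1 hf x hx (δ / 4) (by positivity)
  set p := max a (x - r / 2)
  set q := min b (x + r / 2)
  have hp : p ∈ Icc a b := ⟨le_max_left _ _, max_le (hx.1.trans hx.2) (by linarith [hx.2])⟩
  have hq : q ∈ Icc a b := ⟨le_min (hx.1.trans hx.2) (by linarith [hx.1]), min_le_left _ _⟩
  have hclose : ∀ y ∈ Icc p q, |f y - f x| < δ / 4 := fun y hy => by
    have h₁ := (le_max_right a (x - r / 2)).trans hy.1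
    have h₂ := hy.2.trans (min_le_right b (x + r / 2))
    refine hfr y ⟨hp.1.trans hy.1, hy.2.trans hq.2⟩ ?_
    rw [dist_eq, abs_lt]
    constructor <;> linarith
  have hpx : p ≤ x := max_le hx.1 (by linarith)
  have hxq : x ≤ q := le_min hx.2 (by linarith)
  refine ⟨Icc p q, ?_, ?_⟩
  · refine mem_nhdsWithin.2 ⟨Ioo (x - r / 2) (x + r / 2), isOpen_Ioo, ⟨by linarith, by linarith⟩,
      fun y hy => ?_⟩
    exact ⟨max_le hy.2.1 hy.1.1.le, le_min hy.2.2 hy.1.2.le⟩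
  · filter_upwards [Metric.tendsto_nhds.1 (hlim p hp) (δ / 4) (by positivity),
      Metric.tendsto_nhds.1 (hlim q hq) (δ / 4) (by positivity)] with i hip hiq y hy
    have hy' : y ∈ Icc a b := ⟨hp.1.trans hy.1, hy.2.trans hq.2⟩
    have hyp := hF i hp hy' hy.1
    have hyq := hF i hy' hq hy.2
    have hfp := hclose p ⟨le_rfl, hpx.trans hxq⟩
    have hfq := hclose q ⟨hpx.trans hxq, le_rfl⟩
    have hfy := hclose y hy
    rw [dist_eq, abs_lt] at *
    constructor <;> linarith

section Profiles

variable {ι : Type*} {l : Filter ι} {α : ℝ} {ε : ι → ℝ} {K : ι → ℝ → ℝ → ℝ} {φ : ι → ℝ → ℝ}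

theorem IsProfile.profileMeasure_real_Ioi {K : ℝ → ℝ → ℝ} {φ : ℝ → ℝ} (h : IsProfile K φ) {R : ℝ}
    (hR : 0 ≤ R) : (profileMeasure φ).real (Ioi R) = ∫ z in Ioi R, φ z :=
  profileMeasure_real_apply h.aemeasurable h.2.1 (Ioi_subset_Ioi hR) measurableSet_Ioi

theorem IsProfile.integral_Ioo_eq_sub {K : ℝ → ℝ → ℝ} {φ : ℝ → ℝ} (h : IsProfile K φ)
    [IsFiniteMeasure (profileMeasure φ)] {R : ℝ} (hR : 0 ≤ R) :
    ∫ z in Ioo 0 R, φ z = (∫ z in Ioi 0, φ z) - ∫ z in Ioi R, φ z := by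
  rw [← integral_Ioc_eq_integral_Ioo, ← h.profileMeasure_real_Ioi le_rfl,
    ← h.profileMeasure_real_Ioi hR, ← measureReal_sdiff (Ioi_subset_Ioi hR) measurableSet_Ioi,
    Ioi_sdiff_Ioi, profileMeasure_real_apply h.aemeasurable h.2.1 Ioc_subset_Ioi_self
      measurableSet_Ioc]

theorem tendsto_profileMeasure_real_Ioi (hα : α ∈ Ico (0 : ℝ) 1) (hlim : Tendsto ε l (𝓝 0))
    (hK : ∀ i, IsNearTwo α (ε i) (K i)) (hφ : ∀ i, IsWeakProfile (K i) (profileMeasure (φ i)))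
    {R : ℝ} (hR : 0 ≤ R) :
    Tendsto (fun i => (profileMeasure (φ i)).real (Ioi R)) l (𝓝 (exp (-R))) := by
  have _ := fun i => (hφ i).isFiniteMeasure (hK i)
  exact tendsto_measureReal_Ioi_of_tendsto_bernsteinTransform (fun i => (hφ i).ae_pos)
    (fun i => (hφ i).integrable_id) (fun i => (hφ i).measureReal_univ_le_one (hK i))
    (fun q hq => tendsto_bernsteinTransform hα hlim hK hφ hq) hR

theorem tendstoUniformlyOn_integral_Ioi (hα : α ∈ Ico (0 : ℝ) 1) (hlim : Tendsto ε l (𝓝 0))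
    (hK : ∀ i, IsNearTwo α (ε i) (K i)) (hφ : ∀ i, IsProfile (K i) (φ i))
    (hμ : ∀ i, IsWeakProfile (K i) (profileMeasure (φ i))) (x : ℝ) :
    TendstoUniformlyOn (fun i R => ∫ z in Ioi R, φ i z) (fun R => exp (-R)) l (Icc 0 x) := by
  have _ := fun i => (hμ i).isFiniteMeasure (hK i)
  refine (tendstoUniformlyOn_Icc_of_antitoneOn
    (F := fun i R => (profileMeasure (φ i)).real (Ioi R)) (fun i R _ S _ hRS => ?_) (by fun_prop)
    fun R hR => tendsto_profileMeasure_real_Ioi hα hlim hK hμ hR.1).congr ?_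
  · exact measureReal_mono (Ioi_subset_Ioi hRS)
  · exact .of_forall fun i R hR => (hφ i).profileMeasure_real_Ioi hR.1

theorem tendstoUniformlyOn_integral_Ioo (hα : α ∈ Ico (0 : ℝ) 1) (hlim : Tendsto ε l (𝓝 0))
    (hK : ∀ i, IsNearTwo α (ε i) (K i)) (hφ : ∀ i, IsProfile (K i) (φ i))
    (hμ : ∀ i, IsWeakProfile (K i) (profileMeasure (φ i))) (x : ℝ) :
    TendstoUniformlyOn (fun i R => ∫ z in Ioo 0 R, φ i z) (fun R => 1 - exp (-R)) l (Icc 0 x) := by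
  have _ := fun i => (hμ i).isFiniteMeasure (hK i)
  have hmass : Tendsto (fun i => ∫ z in Ioi 0, φ i z) l (𝓝 1) := by
    simpa only [(hφ _).profileMeasure_real_Ioi le_rfl, neg_zero, exp_zero] using
      tendsto_profileMeasure_real_Ioi hα hlim hK hμ le_rfl
  refine ((hmass.tendstoUniformlyOn_const (Icc 0 x)).sub
    (tendstoUniformlyOn_integral_Ioi hα hlim hK hφ hμ x)).congr ?_
  exact .of_forall fun i R hR => ((hφ i).integral_Ioo_eq_sub hR.1).symm

end Profiles

theorem stmt5_general {ι : Type*} {l : Filter ι} {α : ℝ} (hα : α ∈ Ico (0 : ℝ) 1) {ε : ι → ℝ}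
    (hlim : Tendsto ε l (𝓝 0)) {K : ι → ℝ → ℝ → ℝ} (hK : ∀ i, IsNearTwo α (ε i) (K i))
    {φ : ι → ℝ → ℝ} (hφ : ∀ i, IsProfile (K i) (φ i) ∧ IsNormalised (φ i)) (x : ℝ) :
    TendstoUniformlyOn
      (fun i y => if y ≤ x then ∫ z in Ioo 0 (x - y), φ i z else 0)
      (fun y => if y ≤ x then 1 - exp (-(x - y)) else 0)
      l (Ici 0) ∧
    TendstoUniformlyOn
      (fun i y => ∫ z in Ioi (x - y), φ i z)
      (fun y => exp (-(x - y)))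
      l (Icc 0 x) := by
  have hprofile := fun i => (hφ i).1
  have hweak := fun i =>
    (hφ i).1.isWeakProfile_profileMeasure (hφ i).2 (Ico_subset_Icc_self hα) (hK i)
  have hmem : ∀ y, 0 ≤ y → y ≤ x → x - y ∈ Icc 0 x := fun y hy hyx =>
    ⟨sub_nonneg.2 hyx, sub_le_self x hy⟩
  constructor
  · have h := tendstoUniformlyOn_integral_Ioo hα hlim hK hprofile hweak x
    rw [Metric.tendstoUniformlyOn_iff] at h ⊢
    intro δ hδ
    filter_upwards [h δ hδ] with i hi y hy
    split_ifs with hyx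
    · exact hi _ (hmem y hy hyx)
    · rwa [dist_self]
  · exact ((tendstoUniformlyOn_integral_Ioi hα hlim hK hprofile hweak x).comp (x - ·)).mono
      fun y hy => hmem y hy.1 hy.2

theorem stmt5 (α : ℝ) (hα : α ∈ Ioo (0:ℝ) 1) (W : ℝ → ℝ → ℝ) (hW : GoodW α W)
    (x : ℝ) (hx : 0 < x)
    (ε : ℕ → ℝ) (hε : ∀ k, 0 < ε k) (hlim : Tendsto ε atTop (nhds 0))
    (φ : ℕ → ℝ → ℝ) (hφ : ∀ k, IsProfile (Kern (ε k) W) (φ k) ∧ IsNormalised (φ k)) :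
    TendstoUniformlyOn
      (fun k y => if y ≤ x then ∫ z in Ioo 0 (x - y), φ k z else 0)
      (fun y => if y ≤ x then 1 - exp (-(x - y)) else 0)
      atTop (Ici 0) ∧
    TendstoUniformlyOn
      (fun k y => ∫ z in Ioi (x - y), φ k z)
      (fun y => exp (-(x - y)))
      atTop (Icc 0 x) :=
  stmt5_general (Ioo_subset_Ico_self hα) hlim (fun k => hW.isNearTwo (hε k).le) hφ x
end

section
/- Let α ∈ (0,1) and β ∈ (1+α, 2). There exists a constant C > 0 such that for all g, h ∈ X_{−α,β} the function B₂[g,h] defined by B₂[g,h](x) := (2/x²) ∫₀^x ∫_{x−y}^∞ y g(y) h(z) dz dy belongs to X_{−α,β} and satisfies ‖B₂[g,h]‖_{X_{−α,β}} ≤ C ‖g‖_{X_{−α,β}} ‖h‖_{X_{−α,β}}. -/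
open MeasureTheory Real Set Filter

noncomputable def B2 (g h : ℝ → ℝ) (x : ℝ) : ℝ :=
  (2 / x ^ 2) * ∫ y in Ioo 0 x, ∫ z in Ioi (x - y), y * g y * h z

/-!
The weight `w = weight a b` is at least `1` when `a ≤ 0 ≤ b`, and it is submultiplicative in the
sense that `w x ≤ 2 ^ b * w y * w z` whenever `y < x < y + z`: for `x ≤ 1` because `w` decreases on
`(0, 1]`, and for `x ≥ 1` because `x ≤ 2 * max y z`. The region of integration defining `B2 g h x`
is exactly `y < x < y + z`, so the weight can be moved onto `g` and `h`. This bounds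
`|B2 g h x| * w x` by a multiple of `‖h‖ * x⁻² * ∫ y in (0, x), y * |g y| * w y`, and by Tonelli and
`∫ x in (y, ∞), x⁻² = y⁻¹` the integral over `x` of the remaining factor is `‖g‖`.
-/

open scoped ENNReal NNReal

section Weight

variable {a b x y z : ℝ}

theorem measurable_weight (a b : ℝ) : Measurable (weight a b) :=
  Measurable.ite measurableSet_Iic (by fun_prop) (by fun_prop)

theorem weight_pos (a b : ℝ) (hx : 0 < x) : 0 < weight a b x := by
  unfold weight
  split_ifs <;> positivity

theorem one_le_weight (ha : a ≤ 0) (hb : 0 ≤ b) (hx : 0 < x) : 1 ≤ weight a b x := by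
  unfold weight
  split_ifs with h
  · exact one_le_rpow_of_pos_of_le_one_of_nonpos hx h ha
  · exact one_le_rpow (not_le.1 h).le hb

theorem rpow_le_weight (hab : a ≤ b) (hx : 0 < x) : x ^ b ≤ weight a b x := by
  unfold weight
  split_ifs with h
  · exact rpow_le_rpow_of_exponent_ge hx h hab
  · rfl

theorem rpow_max_le_weight_mul_weight (ha : a ≤ 0) (hb : 0 ≤ b) (hy : 0 < y) (hz : 0 < z) :
    max y z ^ b ≤ weight a b y * weight a b z := by
  rcases max_choice y z with h | h <;> rw [h]
  · exact (rpow_le_weight (ha.trans hb) hy).trans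
      (le_mul_of_one_le_right (weight_pos a b hy).le (one_le_weight ha hb hz))
  · exact (rpow_le_weight (ha.trans hb) hz).trans
      (le_mul_of_one_le_left (weight_pos a b hz).le (one_le_weight ha hb hy))

theorem weight_le_two_rpow_mul (ha : a ≤ 0) (hb : 0 ≤ b) (hy : 0 < y) (hyx : y < x)
    (hxyz : x < y + z) : weight a b x ≤ 2 ^ b * weight a b y * weight a b z := by
  have hz : 0 < z := by linarith
  have hwy := one_le_weight ha hb hy
  have hwz := one_le_weight ha hb hz
  rw [mul_assoc]
  by_cases hx : x ≤ 1
  · calc weight a b x ≤ weight a b y := by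
          simp only [weight, if_pos hx, if_pos (hyx.le.trans hx)]
          exact rpow_le_rpow_of_nonpos hy hyx.le ha
      _ ≤ weight a b y * weight a b z := le_mul_of_one_le_right (by positivity) hwz
      _ ≤ 2 ^ b * (weight a b y * weight a b z) :=
          le_mul_of_one_le_left (by positivity) (one_le_rpow one_le_two hb)
  · calc weight a b x = x ^ b := if_neg hx
      _ ≤ (2 * max y z) ^ b :=
          rpow_le_rpow (by linarith) (by linarith [le_max_left y z, le_max_right y z]) hb
      _ = 2 ^ b * max y z ^ b := mul_rpow zero_le_two (by positivity)
      _ ≤ 2 ^ b * (weight a b y * weight a b z) := by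
          gcongr
          exact rpow_max_le_weight_mul_weight ha hb hy hz

end Weight

section Tonelli

theorem lintegral_Ioi_lintegral_Ioo_swap {X : Type*} [LinearOrder X] [TopologicalSpace X]
    [OrderClosedTopology X] [SecondCountableTopology X] [MeasurableSpace X]
    [OpensMeasurableSpace X] {μ ν : Measure X} [SFinite μ] [SFinite ν] {c : X}
    {K : X → X → ℝ≥0∞}
    (hK : AEMeasurable K.uncurry ((μ.restrict (Ioi c)).prod (ν.restrict (Ioi c)))) :
    ∫⁻ x in Ioi c, ∫⁻ y in Ioo c x, K x y ∂ν ∂μ =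
      ∫⁻ y in Ioi c, ∫⁻ x in Ioi y, K x y ∂μ ∂ν := by
  have hlt : MeasurableSet {p : X × X | p.2 < p.1} :=
    measurableSet_lt measurable_snd measurable_fst
  calc ∫⁻ x in Ioi c, ∫⁻ y in Ioo c x, K x y ∂ν ∂μ
      = ∫⁻ x in Ioi c, ∫⁻ y in Ioi c, {p | p.2 < p.1}.indicator K.uncurry (x, y) ∂ν ∂μ := by
        refine lintegral_congr fun x => ?_
        rw [← Ioi_inter_Iio, inter_comm, ← setLIntegral_indicator measurableSet_Iio]
        rfl
    _ = ∫⁻ y in Ioi c, ∫⁻ x in Ioi c, {p | p.2 < p.1}.indicator K.uncurry (x, y) ∂μ ∂ν :=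
        lintegral_lintegral_swap (hK.indicator hlt)
    _ = ∫⁻ y in Ioi c, ∫⁻ x in Ioi y, K x y ∂μ ∂ν := by
        refine setLIntegral_congr_fun measurableSet_Ioi fun y (hy : c < y) => ?_
        rw [← inter_eq_left.2 (Ioi_subset_Ioi hy.le),
          ← setLIntegral_indicator measurableSet_Ioi]
        rfl

theorem lintegral_Ioi_enorm_inv_sq {c : ℝ} (hc : 0 < c) :
    ∫⁻ x in Ioi c, ‖(x ^ 2)⁻¹‖ₑ = ‖c⁻¹‖ₑ := by
  have hrpow : ∀ x ∈ Ioi c, x ^ (-2 : ℝ) = (x ^ 2)⁻¹ := fun x hx => by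
    rw [rpow_neg (hc.trans hx).le, rpow_two]
  have hint : IntegrableOn (fun x => (x ^ 2)⁻¹) (Ioi c) :=
    (integrableOn_Ioi_rpow_of_lt (by norm_num : (-2 : ℝ) < -1) hc).congr_fun hrpow
      measurableSet_Ioi
  have hval : ∫ x in Ioi c, (x ^ 2)⁻¹ = c⁻¹ := by
    rw [← setIntegral_congr_fun measurableSet_Ioi hrpow,
      integral_Ioi_rpow_of_lt (by norm_num) hc]
    norm_num [rpow_neg_one]
  rw [← ofReal_integral_norm_eq_lintegral_enorm hint, enorm_of_nonneg (by positivity), ← hval]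
  simp only [norm_inv, norm_pow, norm_eq_abs, sq_abs]

theorem lintegral_inv_sq_mul_lintegral_Ioo {G : ℝ → ℝ≥0∞}
    (hG : AEMeasurable G (volume.restrict (Ioi 0))) :
    ∫⁻ x in Ioi 0, ‖(x ^ 2)⁻¹‖ₑ * ∫⁻ y in Ioo 0 x, ‖y‖ₑ * G y = ∫⁻ y in Ioi 0, G y := by
  have hK : AEMeasurable (fun x y => ‖(x ^ 2)⁻¹‖ₑ * (‖y‖ₑ * G y)).uncurry
      ((volume.restrict (Ioi (0 : ℝ))).prod (volume.restrict (Ioi (0 : ℝ)))) :=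
    AEMeasurable.mul (by fun_prop) (AEMeasurable.mul (by fun_prop) hG.comp_snd)
  calc ∫⁻ x in Ioi 0, ‖(x ^ 2)⁻¹‖ₑ * ∫⁻ y in Ioo 0 x, ‖y‖ₑ * G y
      = ∫⁻ x in Ioi 0, ∫⁻ y in Ioo 0 x, ‖(x ^ 2)⁻¹‖ₑ * (‖y‖ₑ * G y) :=
        lintegral_congr fun x => (lintegral_const_mul' _ _ enorm_ne_top).symm
    _ = ∫⁻ y in Ioi 0, ∫⁻ x in Ioi y, ‖(x ^ 2)⁻¹‖ₑ * (‖y‖ₑ * G y) :=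
        lintegral_Ioi_lintegral_Ioo_swap hK
    _ = ∫⁻ y in Ioi 0, G y := by
        refine setLIntegral_congr_fun measurableSet_Ioi fun y (hy : 0 < y) => ?_
        rw [lintegral_mul_const _ (by fun_prop), lintegral_Ioi_enorm_inv_sq hy, ← mul_assoc,
          ← enorm_mul, inv_mul_cancel₀ hy.ne', enorm_one, one_mul]

theorem aestronglyMeasurable_setIntegral {X Y E : Type*} [MeasurableSpace X] [MeasurableSpace Y]
    [NormedAddCommGroup E] [NormedSpace ℝ E] {μ : Measure X} {ν : Measure Y} [SFinite ν]
    {f : X → Y → E} (hf : AEStronglyMeasurable f.uncurry (μ.prod ν)) {s : X → Set Y}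
    (hs : MeasurableSet {p : X × Y | p.2 ∈ s p.1}) :
    AEStronglyMeasurable (fun x => ∫ y in s x, f x y ∂ν) μ := by
  refine (hf.indicator hs).integral_prod_right'.congr (ae_of_all _ fun x => ?_)
  exact integral_indicator (measurable_prodMk_left hs)

end Tonelli

section B2

variable {g h : ℝ → ℝ}

theorem aestronglyMeasurable_B2 (hg : AEStronglyMeasurable g (volume.restrict (Ioi 0)))
    (hh : AEStronglyMeasurable h (volume.restrict (Ioi 0))) :
    AEStronglyMeasurable (B2 g h) := by
  have hyg : AEStronglyMeasurable (fun y => y * g y) (volume.restrict (Ioi 0)) :=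
    aestronglyMeasurable_id.mul hg
  have hinner : AEStronglyMeasurable
      (fun p : ℝ × ℝ => ∫ z in Ioi (p.1 - p.2), p.2 * g p.2 * h z ∂volume.restrict (Ioi 0))
      (volume.prod (volume.restrict (Ioi 0))) :=
    aestronglyMeasurable_setIntegral (X := ℝ × ℝ) (s := fun p => Ioi (p.1 - p.2))
      (f := fun p z => p.2 * g p.2 * h z) (hyg.comp_snd.comp_fst.mul hh.comp_snd)
      (measurableSet_lt (by fun_prop) measurable_snd)
  have houter := aestronglyMeasurable_setIntegral (s := Iio)
    (f := fun x y => ∫ z in Ioi (x - y), y * g y * h z ∂volume.restrict (Ioi 0)) hinner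
    (measurableSet_lt measurable_snd measurable_fst)
  have hfactor : Measurable fun x : ℝ => 2 / x ^ 2 := by fun_prop
  refine (hfactor.aestronglyMeasurable.mul houter).congr (ae_of_all _ fun x => ?_)
  simp only [Pi.mul_apply, B2, Measure.restrict_restrict measurableSet_Iio,
    Measure.restrict_restrict measurableSet_Ioi, Iio_inter_Ioi]
  congr 1
  refine setIntegral_congr_fun measurableSet_Ioo fun y hy => ?_
  simp only [inter_eq_left.2 (Ioi_subset_Ioi (sub_nonneg.2 hy.2.le))]

theorem enorm_B2_le (g h : ℝ → ℝ) (x : ℝ) :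
    ‖B2 g h x‖ₑ ≤
      2 * ‖(x ^ 2)⁻¹‖ₑ * ∫⁻ y in Ioo 0 x, ∫⁻ z in Ioi (x - y), ‖y * g y * h z‖ₑ := by
  have htwo : ‖(2 : ℝ)‖ₑ = 2 := by simp [enorm_eq_ofReal]
  rw [B2, div_eq_mul_inv, enorm_mul, enorm_mul, htwo]
  gcongr
  exact (enorm_integral_le_lintegral_enorm _).trans
    (lintegral_mono fun y => enorm_integral_le_lintegral_enorm _)

variable {w : ℝ → ℝ} {C : ℝ≥0}

theorem enorm_mul_lintegral_tail_le (g h : ℝ → ℝ)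
    (hw : ∀ x y z, 0 < y → y < x → x < y + z → ‖w x‖ ≤ C * ‖w y‖ * ‖w z‖) {x y : ℝ}
    (hy : 0 < y) (hyx : y < x) :
    ‖w x‖ₑ * ∫⁻ z in Ioi (x - y), ‖y * g y * h z‖ₑ ≤
      C * (‖y‖ₑ * ‖g y * w y‖ₑ) * ∫⁻ z in Ioi 0, ‖h z * w z‖ₑ := by
  have hpointwise : ∀ z ∈ Ioi (x - y),
      ‖w x‖ₑ * ‖y * g y * h z‖ₑ ≤ C * (‖y‖ₑ * ‖g y * w y‖ₑ) * ‖h z * w z‖ₑ := fun z hz => by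
    have hwe : ‖w x‖ₑ ≤ C * ‖w y‖ₑ * ‖w z‖ₑ := by
      simp only [enorm_eq_nnnorm]
      exact_mod_cast hw x y z hy hyx (sub_lt_iff_lt_add'.1 hz)
    calc ‖w x‖ₑ * ‖y * g y * h z‖ₑ ≤ C * ‖w y‖ₑ * ‖w z‖ₑ * ‖y * g y * h z‖ₑ := by gcongr
      _ = C * (‖y‖ₑ * ‖g y * w y‖ₑ) * ‖h z * w z‖ₑ := by
          simp only [enorm_mul]
          ring
  calc ‖w x‖ₑ * ∫⁻ z in Ioi (x - y), ‖y * g y * h z‖ₑ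
      = ∫⁻ z in Ioi (x - y), ‖w x‖ₑ * ‖y * g y * h z‖ₑ :=
        (lintegral_const_mul' _ _ enorm_ne_top).symm
    _ ≤ ∫⁻ z in Ioi (x - y), C * (‖y‖ₑ * ‖g y * w y‖ₑ) * ‖h z * w z‖ₑ :=
        setLIntegral_mono' measurableSet_Ioi hpointwise
    _ ≤ ∫⁻ z in Ioi 0, C * (‖y‖ₑ * ‖g y * w y‖ₑ) * ‖h z * w z‖ₑ :=
        lintegral_mono_set (Ioi_subset_Ioi (sub_pos.2 hyx).le)
    _ = C * (‖y‖ₑ * ‖g y * w y‖ₑ) * ∫⁻ z in Ioi 0, ‖h z * w z‖ₑ :=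
        lintegral_const_mul' _ _ (by finiteness)

theorem enorm_B2_mul_le (g h : ℝ → ℝ)
    (hw : ∀ x y z, 0 < y → y < x → x < y + z → ‖w x‖ ≤ C * ‖w y‖ * ‖w z‖) (x : ℝ) :
    ‖B2 g h x * w x‖ₑ ≤ ‖(x ^ 2)⁻¹‖ₑ *
      ∫⁻ y in Ioo 0 x, ‖y‖ₑ * (2 * C * (∫⁻ z in Ioi 0, ‖h z * w z‖ₑ) * ‖g y * w y‖ₑ) :=
  calc ‖B2 g h x * w x‖ₑ
      ≤ 2 * ‖(x ^ 2)⁻¹‖ₑ * (∫⁻ y in Ioo 0 x, ∫⁻ z in Ioi (x - y), ‖y * g y * h z‖ₑ) *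
          ‖w x‖ₑ := by
        rw [enorm_mul]
        gcongr
        exact enorm_B2_le g h x
    _ = ‖(x ^ 2)⁻¹‖ₑ *
          ∫⁻ y in Ioo 0 x, 2 * (‖w x‖ₑ * ∫⁻ z in Ioi (x - y), ‖y * g y * h z‖ₑ) := by
        rw [lintegral_const_mul' _ _ (by finiteness), lintegral_const_mul' _ _ enorm_ne_top]
        ring
    _ ≤ ‖(x ^ 2)⁻¹‖ₑ * ∫⁻ y in Ioo 0 x,
          2 * (C * (‖y‖ₑ * ‖g y * w y‖ₑ) * ∫⁻ z in Ioi 0, ‖h z * w z‖ₑ) := by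
        refine mul_le_mul_right (setLIntegral_mono' measurableSet_Ioo fun y hy => ?_) _
        exact mul_le_mul_right (enorm_mul_lintegral_tail_le g h hw hy.1 hy.2) _
    _ = ‖(x ^ 2)⁻¹‖ₑ *
          ∫⁻ y in Ioo 0 x, ‖y‖ₑ * (2 * C * (∫⁻ z in Ioi 0, ‖h z * w z‖ₑ) * ‖g y * w y‖ₑ) := by
        congr with y
        ring

theorem lintegral_enorm_B2_mul_le (h : ℝ → ℝ)
    (hw : ∀ x y z, 0 < y → y < x → x < y + z → ‖w x‖ ≤ C * ‖w y‖ * ‖w z‖)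
    (hg : AEStronglyMeasurable (fun x => g x * w x) (volume.restrict (Ioi 0))) :
    ∫⁻ x in Ioi 0, ‖B2 g h x * w x‖ₑ ≤
      2 * C * (∫⁻ z in Ioi 0, ‖h z * w z‖ₑ) * ∫⁻ y in Ioi 0, ‖g y * w y‖ₑ := by
  refine (lintegral_mono (enorm_B2_mul_le g h hw)).trans_eq ?_
  rw [lintegral_inv_sq_mul_lintegral_Ioo (hg.enorm.const_mul _), lintegral_const_mul'' _ hg.enorm]

end B2

section Space

variable {a b : ℝ} {g : ℝ → ℝ}

theorem MemX.aestronglyMeasurable (hg : MemX a b g) :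
    AEStronglyMeasurable g (volume.restrict (Ioi 0)) := by
  refine (Integrable.aestronglyMeasurable hg).mul
    (measurable_weight a b).inv.aestronglyMeasurable |>.congr ?_
  filter_upwards [ae_restrict_mem measurableSet_Ioi] with x hx
  exact mul_inv_cancel_right₀ (weight_pos a b hx).ne' _

theorem MemX.Xnorm_eq_toReal_lintegral (hg : MemX a b g) :
    Xnorm a b g = (∫⁻ x in Ioi 0, ‖g x * weight a b x‖ₑ).toReal := by
  rw [← integral_norm_eq_lintegral_enorm (Integrable.aestronglyMeasurable hg)]
  refine setIntegral_congr_fun measurableSet_Ioi fun x hx => ?_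
  rw [norm_mul, norm_of_nonneg (weight_pos a b hx).le, norm_eq_abs]

theorem lintegral_enorm_B2_mul_weight_le (ha : a ≤ 0) (hb : 0 ≤ b) (hg : MemX a b g)
    (h : ℝ → ℝ) :
    ∫⁻ x in Ioi 0, ‖B2 g h x * weight a b x‖ₑ ≤
      2 * ((2 : ℝ≥0) ^ b : ℝ≥0) * (∫⁻ x in Ioi 0, ‖h x * weight a b x‖ₑ) *
        ∫⁻ x in Ioi 0, ‖g x * weight a b x‖ₑ := by
  refine lintegral_enorm_B2_mul_le h (fun x y z hy hyx hxyz => ?_)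
    (Integrable.aestronglyMeasurable hg)
  have hz : 0 < z := by linarith
  simpa only [norm_of_nonneg (weight_pos a b _).le, hy, hz, hy.trans hyx, NNReal.coe_rpow,
    NNReal.coe_ofNat] using weight_le_two_rpow_mul ha hb hy hyx hxyz

end Space

theorem stmt8_general (a b : ℝ) (ha : a ≤ 0) (hb : 0 ≤ b) :
    ∃ C > (0 : ℝ), ∀ g h : ℝ → ℝ, MemX a b g → MemX a b h →
      MemX a b (B2 g h) ∧ Xnorm a b (B2 g h) ≤ C * Xnorm a b g * Xnorm a b h := by
  refine ⟨2 * 2 ^ b, by positivity, fun g h hg hh => ?_⟩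
  have hbound := lintegral_enorm_B2_mul_weight_le ha hb hg h
  have hfinite := ENNReal.mul_lt_top (ENNReal.mul_lt_top (a := 2 * ((2 : ℝ≥0) ^ b : ℝ≥0))
    (by finiteness) hh.hasFiniteIntegral) hg.hasFiniteIntegral
  have hB2 : MemX a b (B2 g h) :=
    ⟨(aestronglyMeasurable_B2 hg.aestronglyMeasurable hh.aestronglyMeasurable).restrict.mul
      (measurable_weight a b).aestronglyMeasurable, hbound.trans_lt hfinite⟩
  refine ⟨hB2, ?_⟩
  rw [hB2.Xnorm_eq_toReal_lintegral, hg.Xnorm_eq_toReal_lintegral,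
    hh.Xnorm_eq_toReal_lintegral, mul_right_comm]
  simpa [ENNReal.toReal_mul] using ENNReal.toReal_mono hfinite.ne hbound

theorem stmt8 (α β : ℝ) (hα : α ∈ Ioo (0:ℝ) 1) (hβ : β ∈ Ioo (1 + α) 2) :
    ∃ C > (0:ℝ), ∀ g h : ℝ → ℝ, MemX (-α) β g → MemX (-α) β h →
      MemX (-α) β (B2 g h) ∧
      Xnorm (-α) β (B2 g h) ≤ C * Xnorm (-α) β g * Xnorm (-α) β h :=
  stmt8_general (-α) β (by linarith [hα.1]) (by linarith [hα.1, hβ.1])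
end
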